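/- Let p ∈ (0,1) be fixed with p > 1 − 1/∛7. Then with high probability sat(G(n,p), C_4) ≤ (3(1+(1−p)³)/(2(1−(1−p)³)))·n·(1+o(1)). -/

import Mathlib

open MeasureTheory Filter Real

/-- The index type of potential edges of a graph on `Fin n`. -/
abbrev EdgeType (n : ℕ) := {e : Sym2 (Fin n) // ¬ e.IsDiag}

/-- The product Bernoulli measure on edge-indicator functions: the binomial
random graph `G(n,p)`. -/
noncomputable def erMeasure (n : ℕ) (p : ℝ) : Measure (EdgeType n → Bool) :=
  Measure.pi fun _ => (PMF.bernoulli (min (Real.toNNReal p) 1) (min_le_right _ _)).toMeasure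

/-- The simple graph determined by an edge-indicator function. -/
def graphOf {n : ℕ} (ω : EdgeType n → Bool) : SimpleGraph (Fin n) :=
  SimpleGraph.fromEdgeSet {e | ∃ h : ¬ e.IsDiag, ω ⟨e, h⟩ = true}

/-- `H` contains a (not necessarily induced) copy of `F`. -/
def ContainsCopy {α β : Type*} (F : SimpleGraph α) (H : SimpleGraph β) : Prop :=
  ∃ f : α → β, Function.Injective f ∧ ∀ ⦃a b⦄, F.Adj a b → H.Adj (f a) (f b)

/-- `H` is `F`-saturated in `G`: `H` is a spanning subgraph of `G` that is `F`-free,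
and adding any edge of `G` missing from `H` creates a copy of `F`. -/
def IsSaturatedIn {V : Type*} {α : Type*} (G H : SimpleGraph V) (F : SimpleGraph α) : Prop :=
  H ≤ G ∧ ¬ ContainsCopy F H ∧
    ∀ v w : V, G.Adj v w → ¬ H.Adj v w →
      ContainsCopy F (H ⊔ SimpleGraph.fromEdgeSet {s(v, w)})

/-- The saturation number `sat(G,F)`: the minimum number of edges of an
`F`-saturated spanning subgraph of `G`. -/
noncomputable def satNum {V α : Type*} (G : SimpleGraph V) (F : SimpleGraph α) : ℕ :=
  sInf {k | ∃ H : SimpleGraph V, IsSaturatedIn G H F ∧ H.edgeSet.ncard = k}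

/-- The cycle `C_m`, as a graph on `ZMod m`. -/
def cycGraph (m : ℕ) : SimpleGraph (ZMod m) :=
  SimpleGraph.fromRel (fun a b => a = b + 1)

/-!
Write `Q = (1 - p) ^ 3`. A saturated subgraph is built in layers on a shrinking vertex set `S`.
Three pairwise adjacent centres are chosen in `S`; the vertices adjacent to a centre become leaves,
each joined to one centre, and the leaves of each centre are maximally matched among themselves. A
proportion `Q` of `S` sees no centre. Each such vertex is attached to one leaf of every centre,
with no two attached to equal or matched leaves of the same centre. No four-cycle arises, and every
pair of adjacent vertices of `G` meeting the leaves or centres is an edge or is joined by a path of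
length three through a centre, so recursing on the remaining `Q |S|` vertices gives a saturated
graph. A layer costs at most `(3 |S| + 3 Q |S|) / 2` edges, and the geometric series sums to the
claimed constant.

By Hall's theorem the attachment is possible when every class of leaves has more than `2 Q |S|`
vertices. Assigning a leaf `x` to a centre `i` such that `x` is adjacent to `i` but not to `i + 1`
(cyclically), and splitting the vertices adjacent to all centres equally, makes each class of size
about `(1 - Q) / 3 * |S|`, whence the condition `Q < 1 / 7`.

All this needs only the sizes of common neighbourhoods and non-neighbourhoods of `O(log n)`
vertices, which a Chernoff bound controls in `G(n,p)` until about `n ^ (2 / 5)` vertices are left;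
there, an arbitrary saturated graph adds only `O(n ^ (4 / 5))` edges.
-/

/-! ### Four-cycles and relative saturation -/

section Saturation

variable {V : Type*} {G H : SimpleGraph V} {S : Set V} {u v : V}

/-- `H` contains no four-cycle: no two vertices have two common neighbours. -/
def C4Free (H : SimpleGraph V) : Prop :=
  Pairwise fun u v => (H.commonNeighbors u v).Subsingleton

/-- `u` and `v` are the ends of a path with three edges of `H`. -/
def JoinedByPath3 (H : SimpleGraph V) (u v : V) : Prop :=
  ∃ x y, H.Adj u x ∧ H.Adj x y ∧ H.Adj y v ∧ u ≠ y ∧ x ≠ v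

/-- `H` is `C₄`-saturated in the subgraph of `G` induced by `S`. All graphs keep the vertex type
`V`; vertices outside `S` are isolated in `H`. -/
structure IsC4SaturatedOn (G : SimpleGraph V) (S : Set V) (H : SimpleGraph V) : Prop where
  le : H ≤ G
  support_subset : H.support ⊆ S
  c4Free : C4Free H
  joined : ∀ ⦃u⦄, u ∈ S → ∀ ⦃v⦄, v ∈ S → G.Adj u v → ¬ H.Adj u v → JoinedByPath3 H u v

theorem JoinedByPath3.symm (h : JoinedByPath3 H u v) : JoinedByPath3 H v u := by
  obtain ⟨x, y, hux, hxy, hyv, huy, hxv⟩ := h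
  exact ⟨y, x, hyv.symm, hxy.symm, hux.symm, hxv.symm, huy.symm⟩

theorem JoinedByPath3.mono {H' : SimpleGraph V} (h : JoinedByPath3 H u v) (hle : H ≤ H') :
    JoinedByPath3 H' u v := by
  obtain ⟨x, y, hux, hxy, hyv, huy, hxv⟩ := h
  exact ⟨x, y, hle hux, hle hxy, hle hyv, huy, hxv⟩

theorem cycGraph_four_adj (a b : ZMod 4) : (cycGraph 4).Adj a b ↔ a = b + 1 ∨ b = a + 1 := by
  rw [cycGraph, SimpleGraph.fromRel_adj]
  revert a b
  decide

theorem containsCopy_cycGraph_four_iff :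
    ContainsCopy (cycGraph 4) H ↔
      ∃ u x v y, H.Adj u x ∧ H.Adj x v ∧ H.Adj v y ∧ H.Adj y u ∧ u ≠ v ∧ x ≠ y := by
  constructor
  · rintro ⟨f, hf, h⟩
    refine ⟨f 0, f 1, f 2, f 3, h ?_, h ?_, h ?_, h ?_, hf.ne (by decide), hf.ne (by decide)⟩ <;>
      rw [cycGraph_four_adj] <;> decide
  · rintro ⟨u, x, v, y, hux, hxv, hvy, hyu, huv, hxy⟩
    let f : Fin 4 → V := ![u, x, v, y]
    have hf_inj : ∀ a b : Fin 4, f a = f b → a = b := by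
      intro a b
      fin_cases a <;> fin_cases b <;>
        simp [f, hux.ne, hux.ne', hxv.ne, hxv.ne', hvy.ne, hvy.ne', hyu.ne, hyu.ne', huv, hxy,
          Ne.symm huv, Ne.symm hxy]
    have hf_adj : ∀ a b : Fin 4, a = b + 1 ∨ b = a + 1 → H.Adj (f a) (f b) := by
      intro a b
      fin_cases a <;> fin_cases b <;>
        simp [f, hux, hxv, hvy, hyu, hux.symm, hxv.symm, hvy.symm, hyu.symm]
    exact ⟨f, hf_inj, fun a b hab => hf_adj a b ((cycGraph_four_adj a b).1 hab)⟩

theorem C4Free.not_containsCopy (h : C4Free H) : ¬ ContainsCopy (cycGraph 4) H := by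
  rw [containsCopy_cycGraph_four_iff]
  rintro ⟨u, x, v, y, hux, hxv, hvy, hyu, huv, hxy⟩
  exact hxy (h huv ⟨hux, hxv.symm⟩ ⟨hyu.symm, hvy⟩)

theorem JoinedByPath3.containsCopy_sup_fromEdgeSet (h : JoinedByPath3 H u v) (huv : u ≠ v) :
    ContainsCopy (cycGraph 4) (H ⊔ SimpleGraph.fromEdgeSet {s(u, v)}) := by
  obtain ⟨x, y, hux, hxy, hyv, huy, hxv⟩ := h
  refine containsCopy_cycGraph_four_iff.2
    ⟨u, x, y, v, Or.inl hux, Or.inl hxy, Or.inl hyv, Or.inr ?_, huy, hxv⟩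
  simp [Sym2.eq_swap, huv.symm]

theorem IsC4SaturatedOn.isSaturatedIn (h : IsC4SaturatedOn G Set.univ H) :
    IsSaturatedIn G H (cycGraph 4) :=
  ⟨h.le, h.c4Free.not_containsCopy, fun _ _ hG hH =>
    (h.joined trivial trivial hG hH).containsCopy_sup_fromEdgeSet hG.ne⟩

theorem satNum_le_ncard_edgeSet {α : Type*} {F : SimpleGraph α} (h : IsSaturatedIn G H F) :
    satNum G F ≤ H.edgeSet.ncard :=
  Nat.sInf_le ⟨H, h, rfl⟩

theorem C4Free.sup_edge (h : C4Free H) (hp : ¬ JoinedByPath3 H u v) :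
    C4Free (H ⊔ SimpleGraph.edge u v) := by
  intro a b hab x hx y hy
  by_contra hxy
  have hfree : H.Adj a x → H.Adj b x → H.Adj a y → H.Adj b y → False :=
    fun hax hbx hay hby => hxy (h hab ⟨hax, hbx⟩ ⟨hay, hby⟩)
  have hpath : ∀ x y, H.Adj u x → H.Adj x y → H.Adj y v → u = y ∨ x = v := by
    intro x y hux hxy hyv
    by_contra! hne
    exact hp ⟨x, y, hux, hxy, hyv, hne.1, hne.2⟩
  simp only [SimpleGraph.mem_commonNeighbors, SimpleGraph.sup_adj, SimpleGraph.edge_adj] at hx hy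
  grind [SimpleGraph.Adj.symm, SimpleGraph.irrefl]

theorem exists_isC4SaturatedOn [Finite V] (G : SimpleGraph V) (S : Set V) :
    ∃ H, IsC4SaturatedOn G S H := by
  obtain ⟨H, ⟨hle, hsupp, hfree⟩, hmax⟩ :=
    (Set.toFinite {H : SimpleGraph V | H ≤ G ∧ H.support ⊆ S ∧ C4Free H}).exists_maximal
      ⟨⊥, bot_le, by simp, fun u v _ x hx => absurd hx.1 (by simp)⟩
  refine ⟨H, hle, hsupp, hfree, fun u hu v hv hG hH => ?_⟩
  by_contra hp
  have hsup : H ⊔ SimpleGraph.edge u v ≤ H := by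
    refine hmax ⟨sup_le hle ?_, ?_, hfree.sup_edge hp⟩ le_sup_left
    · exact (SimpleGraph.edge_le_iff G).2 (Or.inr hG)
    · rintro a ⟨b, hab | hab⟩
      · exact hsupp ⟨b, hab⟩
      · rw [SimpleGraph.edge_adj] at hab
        grind
  exact hH (hsup (Or.inr (by simp [SimpleGraph.edge_adj, hG.ne])))

theorem ncard_edgeSet_le_sq [Finite V] (h : H.support ⊆ S) :
    H.edgeSet.ncard ≤ S.ncard ^ 2 := by
  have hsub : H.edgeSet ⊆ (fun z : V × V => s(z.1, z.2)) '' (S ×ˢ S) := by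
    rintro ⟨a, b⟩ hab
    exact ⟨(a, b), ⟨h ⟨b, hab⟩, h ⟨a, SimpleGraph.Adj.symm hab⟩⟩, rfl⟩
  calc H.edgeSet.ncard ≤ ((fun z : V × V => s(z.1, z.2)) '' (S ×ˢ S)).ncard :=
        Set.ncard_le_ncard hsub
    _ ≤ (S ×ˢ S).ncard := Set.ncard_image_le
    _ = S.ncard ^ 2 := by rw [Set.ncard_prod, sq]

end Saturation

/-! ### Building a saturated graph in layers -/

/-- Three pairwise adjacent vertices of `S`, the centres of one layer of the construction. -/
structure CenterTriangle {V : Type*} (G : SimpleGraph V) (S : Set V) where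
  center : Fin 3 → V
  center_mem : ∀ i, center i ∈ S
  center_adj : Pairwise fun i j => G.Adj (center i) (center j)

namespace CenterTriangle

variable {V : Type*} {G : SimpleGraph V} {S : Set V} (t : CenterTriangle G S)

/-- The vertices of `S` adjacent to no centre; the construction recurses on them. -/
def rest : Set V := {v ∈ S | ∀ i, ¬ G.Adj v (t.center i)}

/-- The vertices of `S`, other than the centres, that are adjacent to a centre. -/
def leaves : Set V := {v ∈ S | v ∉ Set.range t.center ∧ ∃ i, G.Adj v (t.center i)}

theorem center_injective : Function.Injective t.center :=
  fun _ _ h => of_not_not fun hne => (t.center_adj hne).ne h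

theorem center_notMem_rest (i : Fin 3) : t.center i ∉ t.rest :=
  fun h => h.2 (i + 1) (t.center_adj (by simp))

theorem center_notMem_leaves (i : Fin 3) : t.center i ∉ t.leaves := fun h => h.2.1 ⟨i, rfl⟩

theorem disjoint_rest_leaves : Disjoint t.rest t.leaves :=
  Set.disjoint_left.2 fun _ hr hl => hl.2.2.elim hr.2

theorem rest_union_leaves_union_range_center :
    t.rest ∪ t.leaves ∪ Set.range t.center = S := by
  ext v
  have := t.center_mem
  simp only [rest, leaves, Set.mem_union, Set.mem_ofPred_eq, Set.mem_range]
  grind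

theorem mem_cases {v : V} (hv : v ∈ S) : v ∈ t.rest ∨ v ∈ t.leaves ∨ ∃ i, t.center i = v := by
  rwa [← t.rest_union_leaves_union_range_center, Set.mem_union, Set.mem_union, or_assoc] at hv

theorem ncard_rest_add_ncard_leaves [Finite V] :
    t.rest.ncard + t.leaves.ncard + 3 = S.ncard := by
  have hdisj : Disjoint (t.rest ∪ t.leaves) (Set.range t.center) := by
    rw [Set.disjoint_right]
    rintro _ ⟨i, rfl⟩ (h | h)
    exacts [t.center_notMem_rest i h, t.center_notMem_leaves i h]
  conv_rhs => rw [← t.rest_union_leaves_union_range_center]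
  rw [Set.ncard_union_eq hdisj, Set.ncard_union_eq t.disjoint_rest_leaves,
    ← Set.image_univ, Set.ncard_image_of_injective _ t.center_injective, Set.ncard_univ,
    Nat.card_fin]

end CenterTriangle

/-- The data from which one layer of the construction is built: the leaves are split into three
classes, the leaves of class `i` being adjacent to `center i`; `mate` encodes a maximal matching
inside every class (its fixed points are the unmatched leaves); every remaining vertex `y` is
attached to the leaf `attach i y` of each class `i`, no two of them to the same leaf or to matched
leaves. -/
structure Layer {V : Type*} (G : SimpleGraph V) (S : Set V) extends CenterTriangle G S where
  cls : V → Fin 3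
  adj_center_cls : ∀ x ∈ toCenterTriangle.leaves, G.Adj x (center (cls x))
  mate : V → V
  mate_involutive : Function.Involutive mate
  mate_mem : ∀ x ∈ toCenterTriangle.leaves, mate x ∈ toCenterTriangle.leaves
  cls_mate : ∀ x ∈ toCenterTriangle.leaves, cls (mate x) = cls x
  adj_mate : ∀ x ∈ toCenterTriangle.leaves, mate x ≠ x → G.Adj x (mate x)
  not_adj_of_mate_eq : ∀ x ∈ toCenterTriangle.leaves, ∀ y ∈ toCenterTriangle.leaves,
    cls x = cls y → mate x = x → mate y = y → ¬ G.Adj x y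
  attach : Fin 3 → V → V
  attach_mem : ∀ i, ∀ y ∈ toCenterTriangle.rest, attach i y ∈ toCenterTriangle.leaves
  cls_attach : ∀ i, ∀ y ∈ toCenterTriangle.rest, cls (attach i y) = i
  adj_attach : ∀ i, ∀ y ∈ toCenterTriangle.rest, G.Adj y (attach i y)
  attach_injOn : ∀ i, Set.InjOn (fun y => s(attach i y, mate (attach i y)))
    toCenterTriangle.rest

namespace Layer

variable {V : Type*} {G H : SimpleGraph V} {S : Set V} (l : Layer G S) {i j : Fin 3} {u v x y : V}

/-- The edges that a layer adds to a graph `H` on the remaining vertices, directed arbitrarily. -/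
inductive Link (H : SimpleGraph V) : V → V → Prop
  | rest {u v : V} : H.Adj u v → Link H u v
  | center (i j : Fin 3) : Link H (l.center i) (l.center j)
  | spoke {x : V} : x ∈ l.leaves → Link H x (l.center (l.cls x))
  | mate {x : V} : x ∈ l.leaves → Link H x (l.mate x)
  | attach {y : V} (i : Fin 3) : y ∈ l.rest → Link H y (l.attach i y)

/-- The graph `H` on the remaining vertices, extended by the edges of the layer. -/
def graph (H : SimpleGraph V) : SimpleGraph V := SimpleGraph.fromRel (l.Link H)

theorem eq_of_attach_eq (hx : x ∈ l.rest) (hy : y ∈ l.rest) (h : l.attach i x = l.attach i y) :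
    x = y :=
  l.attach_injOn i hx hy (by simp [h])

theorem eq_of_mate_attach_eq (hx : x ∈ l.rest) (hy : y ∈ l.rest)
    (h : l.mate (l.attach i x) = l.attach i y) : x = y :=
  l.attach_injOn i hx hy (by simp [← h, l.mate_involutive _, Sym2.eq_swap])

theorem graph_adj : (l.graph H).Adj u v ↔ u ≠ v ∧ (l.Link H u v ∨ l.Link H v u) :=
  SimpleGraph.fromRel_adj _ u v

theorem adj_center_iff (hH : H.support ⊆ l.rest) :
    (l.graph H).Adj (l.center i) v ↔
      (∃ j, j ≠ i ∧ l.center j = v) ∨ (v ∈ l.leaves ∧ l.cls v = i) := by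
  have hr := l.center_notMem_rest
  have hl := l.center_notMem_leaves
  have hinj := l.center_injective
  rw [graph_adj]
  constructor
  · rintro ⟨hne, h⟩
    generalize e : l.center i = u at h hne
    rcases h with (h | ⟨j, k⟩ | h | h | ⟨k, h⟩) | (h | ⟨j, k⟩ | h | h | ⟨k, h⟩)
    · exact absurd (e ▸ hH ⟨v, h⟩) (hr i)
    · exact Or.inl ⟨k, fun hk => hne (by rw [← e, hk]), rfl⟩
    · exact absurd (e ▸ h) (hl i)
    · exact absurd (e ▸ h) (hl i)
    · exact absurd (e ▸ h) (hr i)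
    · exact absurd (e ▸ hH ⟨v, h.symm⟩) (hr i)
    · exact Or.inl ⟨j, fun hj => hne (by rw [← e, hj]), rfl⟩
    · exact Or.inr ⟨h, (hinj e).symm⟩
    · exact absurd (e ▸ l.mate_mem _ h) (hl i)
    · exact absurd (e ▸ l.attach_mem k _ h) (hl i)
  · rintro (⟨j, hj, rfl⟩ | ⟨hv, rfl⟩)
    · exact ⟨hinj.ne hj.symm, Or.inl (.center i j)⟩
    · exact ⟨fun e => hl _ (e ▸ hv), Or.inr (.spoke hv)⟩

theorem adj_leaf_iff (hH : H.support ⊆ l.rest) (hx : x ∈ l.leaves) :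
    (l.graph H).Adj x v ↔ l.center (l.cls x) = v ∨ (l.mate x = v ∧ v ≠ x) ∨
      (v ∈ l.rest ∧ l.attach (l.cls x) v = x) := by
  have hr : x ∉ l.rest := fun h => Set.disjoint_left.1 l.disjoint_rest_leaves h hx
  have hl : ∀ i, l.center i ≠ x := fun i e => l.center_notMem_leaves i (e ▸ hx)
  rw [graph_adj]
  constructor
  · rintro ⟨hne, (h | ⟨j, k⟩ | h | h | ⟨k, h⟩) | (h | ⟨j, k⟩ | h | h | ⟨k, h⟩)⟩
    · exact absurd (hH ⟨v, h⟩) hr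
    · exact absurd rfl (hl j)
    · exact Or.inl rfl
    · exact Or.inr (Or.inl ⟨rfl, hne.symm⟩)
    · exact absurd h hr
    · exact absurd (hH ⟨v, h.symm⟩) hr
    · exact absurd rfl (hl k)
    · exact absurd rfl (hl _)
    · exact Or.inr (Or.inl ⟨l.mate_involutive v, hne.symm⟩)
    · exact Or.inr (Or.inr ⟨h, by rw [l.cls_attach k _ h]⟩)
  · rintro (rfl | ⟨rfl, hne⟩ | ⟨hv, e⟩)
    · exact ⟨(hl _).symm, Or.inl (.spoke hx)⟩
    · exact ⟨hne.symm, Or.inl (.mate hx)⟩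
    · exact ⟨fun h => hr (h ▸ hv), Or.inr (by simpa [e] using Link.attach (l.cls x) hv)⟩

theorem adj_rest_iff (hy : y ∈ l.rest) :
    (l.graph H).Adj y v ↔ H.Adj y v ∨ ∃ i, l.attach i y = v := by
  have hl : y ∉ l.leaves := Set.disjoint_left.1 l.disjoint_rest_leaves hy
  have hc : ∀ i, l.center i ≠ y := fun i e => l.center_notMem_rest i (e ▸ hy)
  rw [graph_adj]
  constructor
  · rintro ⟨-, (h | ⟨j, k⟩ | h | h | ⟨k, h⟩) | (h | ⟨j, k⟩ | h | h | ⟨k, h⟩)⟩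
    · exact Or.inl h
    · exact absurd rfl (hc j)
    · exact absurd h hl
    · exact absurd h hl
    · exact Or.inr ⟨k, rfl⟩
    · exact Or.inl h.symm
    · exact absurd rfl (hc k)
    · exact absurd rfl (hc _)
    · exact absurd (l.mate_mem v h) hl
    · exact absurd (l.attach_mem k v h) hl
  · rintro (h | ⟨i, rfl⟩)
    · exact ⟨h.ne, Or.inl (.rest h)⟩
    · exact ⟨fun e => hl (e ▸ l.attach_mem i y hy), Or.inl (.attach i hy)⟩

theorem support_graph_subset (hH : H.support ⊆ l.rest) : (l.graph H).support ⊆ S := by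
  have hrest : l.rest ⊆ S := Set.sep_subset _ _
  have hleaves : l.leaves ⊆ S := Set.sep_subset _ _
  have hlink : ∀ {u v}, l.Link H u v → u ∈ S ∧ v ∈ S := by
    rintro u v (h | ⟨i, j⟩ | h | h | ⟨i, h⟩)
    · exact ⟨hrest (hH ⟨_, h⟩), hrest (hH ⟨_, h.symm⟩)⟩
    · exact ⟨l.center_mem i, l.center_mem j⟩
    · exact ⟨hleaves h, l.center_mem _⟩
    · exact ⟨hleaves h, hleaves (l.mate_mem _ h)⟩
    · exact ⟨hrest h, hleaves (l.attach_mem i _ h)⟩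
  rintro u ⟨v, -, h | h⟩
  exacts [(hlink h).1, (hlink h).2]

theorem graph_le (hH : H ≤ G) : l.graph H ≤ G := by
  have hlink : ∀ {u v}, u ≠ v → l.Link H u v → G.Adj u v := by
    rintro u v hne (h | ⟨i, j⟩ | h | h | ⟨i, h⟩)
    · exact hH h
    · exact l.center_adj fun e => hne (congrArg l.center e)
    · exact l.adj_center_cls _ h
    · exact l.adj_mate _ h hne.symm
    · exact l.adj_attach i _ h
  rintro u v ⟨hne, h | h⟩
  exacts [hlink hne h, (hlink hne.symm h).symm]

theorem subsingleton_attach_fiber (i : Fin 3) (u : V) :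
    {x ∈ l.rest | l.attach i x = u}.Subsingleton :=
  fun _ hx _ hy => l.eq_of_attach_eq hx.1 hy.1 (hx.2.trans hy.2.symm)

theorem subsingleton_commonNeighbors_center_center (hH : H.support ⊆ l.rest) (hij : i ≠ j) :
    ((l.graph H).commonNeighbors (l.center i) (l.center j)).Subsingleton := by
  have hthird : ∀ i j : Fin 3, i ≠ j → ∃ k, ∀ k', k' ≠ i → k' ≠ j → k' = k := by decide
  obtain ⟨k, hk⟩ := hthird i j hij
  refine Set.subsingleton_of_subset_singleton (a := l.center k) ?_
  rintro x ⟨hix, hjx⟩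
  rw [SimpleGraph.mem_neighborSet, l.adj_center_iff hH] at hix hjx
  rcases hix with ⟨a, hai, rfl⟩ | ⟨hx, hci⟩ <;> rcases hjx with ⟨b, hbj, hb⟩ | ⟨hx', hcj⟩
  · exact congrArg l.center (hk a hai (l.center_injective hb ▸ hbj))
  · exact absurd hx' (l.center_notMem_leaves a)
  · exact absurd (hb ▸ hx) (l.center_notMem_leaves b)
  · exact absurd (hci.symm.trans hcj) hij

theorem subsingleton_commonNeighbors_center_leaf (hH : H.support ⊆ l.rest) (hv : v ∈ l.leaves) :
    ((l.graph H).commonNeighbors (l.center i) v).Subsingleton := by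
  have hd := Set.disjoint_left.1 l.disjoint_rest_leaves
  have hinj := l.center_injective
  refine Set.subsingleton_of_subset_singleton
    (a := if l.cls v = i then l.mate v else l.center (l.cls v)) ?_
  rintro x ⟨hix, hvx⟩
  rw [SimpleGraph.mem_neighborSet, l.adj_center_iff hH] at hix
  rw [SimpleGraph.mem_neighborSet, l.adj_leaf_iff hH hv] at hvx
  grind [Function.Injective, l.center_notMem_leaves, l.center_notMem_rest, l.cls_mate,
    l.mate_mem]

theorem subsingleton_commonNeighbors_center_rest (hH : H.support ⊆ l.rest) (hv : v ∈ l.rest) :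
    ((l.graph H).commonNeighbors (l.center i) v).Subsingleton := by
  have hd := Set.disjoint_left.1 l.disjoint_rest_leaves
  have hmem : ∀ x, H.Adj v x → x ∈ l.rest := fun x h => hH ⟨v, h.symm⟩
  refine Set.subsingleton_of_subset_singleton (a := l.attach i v) ?_
  rintro x ⟨hix, hvx⟩
  rw [SimpleGraph.mem_neighborSet, l.adj_center_iff hH] at hix
  rw [SimpleGraph.mem_neighborSet, l.adj_rest_iff hv] at hvx
  grind [l.center_notMem_leaves, l.center_notMem_rest, l.attach_mem, l.cls_attach]

theorem subsingleton_commonNeighbors_leaf_leaf (hH : H.support ⊆ l.rest) (hu : u ∈ l.leaves)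
    (hv : v ∈ l.leaves) (huv : u ≠ v) :
    ((l.graph H).commonNeighbors u v).Subsingleton := by
  have hd := Set.disjoint_left.1 l.disjoint_rest_leaves
  have hinj := l.center_injective
  have hmate := l.mate_involutive.injective
  by_cases hc : l.cls u = l.cls v
  · refine Set.subsingleton_of_subset_singleton (a := l.center (l.cls u)) ?_
    rintro x ⟨hux, hvx⟩
    rw [SimpleGraph.mem_neighborSet, l.adj_leaf_iff hH ‹_›] at hux hvx
    grind [Function.Injective, l.mate_mem]
  · refine (l.subsingleton_attach_fiber (l.cls u) u).anti ?_
    rintro x ⟨hux, hvx⟩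
    rw [SimpleGraph.mem_neighborSet, l.adj_leaf_iff hH ‹_›] at hux hvx
    rw [Set.mem_ofPred_eq]
    grind [Function.Injective, l.mate_mem, l.cls_mate, l.center_notMem_leaves,
      l.center_notMem_rest]

theorem subsingleton_commonNeighbors_leaf_rest (hH : H.support ⊆ l.rest) (hu : u ∈ l.leaves)
    (hv : v ∈ l.rest) :
    ((l.graph H).commonNeighbors u v).Subsingleton := by
  have hd := Set.disjoint_left.1 l.disjoint_rest_leaves
  have hmem : ∀ x, H.Adj v x → x ∈ l.rest := fun x h => hH ⟨v, h.symm⟩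
  by_cases hm : l.mate u = l.attach (l.cls u) v
  · have hattach : ∀ x ∈ l.rest, l.attach (l.cls u) x = u → x = v :=
      fun x hx e => l.eq_of_mate_attach_eq (i := l.cls u) hx hv (by rw [e, hm])
    refine Set.subsingleton_of_subset_singleton (a := l.mate u) ?_
    rintro x ⟨hux, hvx⟩
    rw [SimpleGraph.mem_neighborSet, l.adj_leaf_iff hH hu] at hux
    rw [SimpleGraph.mem_neighborSet, l.adj_rest_iff hv] at hvx
    grind [SimpleGraph.irrefl, l.center_notMem_leaves, l.center_notMem_rest, l.attach_mem]
  · refine (l.subsingleton_attach_fiber (l.cls u) u).anti ?_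
    rintro x ⟨hux, hvx⟩
    rw [SimpleGraph.mem_neighborSet, l.adj_leaf_iff hH hu] at hux
    rw [SimpleGraph.mem_neighborSet, l.adj_rest_iff hv] at hvx
    rw [Set.mem_ofPred_eq]
    have hleaf := fun i => l.attach_mem i v hv
    have hcls := fun i => l.cls_attach i v hv
    grind [l.mate_mem, l.cls_mate, l.center_notMem_leaves, l.center_notMem_rest]

theorem subsingleton_commonNeighbors_rest_rest (hH : H.support ⊆ l.rest) (hfree : C4Free H)
    (hu : u ∈ l.rest) (hv : v ∈ l.rest) (huv : u ≠ v) :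
    ((l.graph H).commonNeighbors u v).Subsingleton := by
  have hd := Set.disjoint_left.1 l.disjoint_rest_leaves
  have hmem : ∀ ⦃x y⦄, H.Adj x y → y ∈ l.rest := fun x y h => hH ⟨x, h.symm⟩
  refine (hfree huv).anti ?_
  rintro x ⟨hux, hvx⟩
  rw [SimpleGraph.mem_neighborSet, l.adj_rest_iff ‹_›] at hux hvx
  rw [SimpleGraph.mem_commonNeighbors]
  have hleaf := fun i => And.intro (l.attach_mem i u hu) (l.attach_mem i v hv)
  have hcls := fun i => And.intro (l.cls_attach i u hu) (l.cls_attach i v hv)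
  have hne := fun i h => huv (l.eq_of_attach_eq (i := i) hu hv h)
  grind

theorem c4Free_graph (hH : H.support ⊆ l.rest) (hfree : C4Free H) : C4Free (l.graph H) := by
  have hsymm := (l.graph H).commonNeighbors_symm
  intro u v huv x hx
  have hu := l.mem_cases (l.support_graph_subset hH ⟨x, hx.1⟩)
  have hv := l.mem_cases (l.support_graph_subset hH ⟨x, hx.2⟩)
  refine Set.Subsingleton.anti (t := (l.graph H).commonNeighbors u v) ?_ subset_rfl hx
  rcases hu with hu | hu | ⟨i, rfl⟩ <;> rcases hv with hv | hv | ⟨j, rfl⟩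
  · exact l.subsingleton_commonNeighbors_rest_rest hH hfree hu hv huv
  · exact hsymm v u ▸ l.subsingleton_commonNeighbors_leaf_rest hH hv hu
  · exact hsymm _ u ▸ l.subsingleton_commonNeighbors_center_rest hH hu
  · exact l.subsingleton_commonNeighbors_leaf_rest hH hu hv
  · exact l.subsingleton_commonNeighbors_leaf_leaf hH hu hv huv
  · exact hsymm _ u ▸ l.subsingleton_commonNeighbors_center_leaf hH hu
  · exact l.subsingleton_commonNeighbors_center_rest hH hv
  · exact l.subsingleton_commonNeighbors_center_leaf hH hv
  · exact l.subsingleton_commonNeighbors_center_center hH (ne_of_apply_ne l.center huv)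

theorem adj_center_center (hij : i ≠ j) : (l.graph H).Adj (l.center i) (l.center j) :=
  ⟨l.center_injective.ne hij, Or.inl (.center i j)⟩

theorem adj_spoke (hx : x ∈ l.leaves) : (l.graph H).Adj x (l.center (l.cls x)) :=
  ⟨fun e => l.center_notMem_leaves _ (e ▸ hx), Or.inl (.spoke hx)⟩

theorem adj_mate_of_ne (hx : x ∈ l.leaves) (hne : l.mate x ≠ x) : (l.graph H).Adj x (l.mate x) :=
  ⟨hne.symm, Or.inl (.mate hx)⟩

theorem adj_attach_of_mem_rest (i : Fin 3) (hy : y ∈ l.rest) : (l.graph H).Adj y (l.attach i y) :=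
  (l.adj_rest_iff hy).2 (Or.inr ⟨i, rfl⟩)

theorem adj_attach_center (i : Fin 3) (hy : y ∈ l.rest) :
    (l.graph H).Adj (l.attach i y) (l.center i) := by
  simpa only [l.cls_attach i y hy] using l.adj_spoke (H := H) (l.attach_mem i y hy)

theorem joinedByPath3_rest_center (i : Fin 3) (hy : y ∈ l.rest) :
    JoinedByPath3 (l.graph H) y (l.center i) :=
  ⟨l.attach (i + 1) y, l.center (i + 1), l.adj_attach_of_mem_rest _ hy, l.adj_attach_center _ hy,
    l.adj_center_center (by simp), fun e => l.center_notMem_rest _ (e ▸ hy),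
    fun e => l.center_notMem_leaves i (e ▸ l.attach_mem _ y hy)⟩

theorem joinedByPath3_leaf_center (hx : x ∈ l.leaves) (hi : l.cls x ≠ i) :
    JoinedByPath3 (l.graph H) x (l.center i) := by
  have hthird : ∀ i j : Fin 3, ∃ k, i ≠ k ∧ k ≠ j := by decide
  obtain ⟨k, hk, hki⟩ := hthird (l.cls x) i
  exact ⟨l.center (l.cls x), l.center k, l.adj_spoke hx, l.adj_center_center hk,
    l.adj_center_center hki, fun e => l.center_notMem_leaves k (e ▸ hx),
    l.center_injective.ne hi⟩

theorem joinedByPath3_leaf_rest (hx : x ∈ l.leaves) (hy : y ∈ l.rest)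
    (hxy : ¬ (l.graph H).Adj x y) : JoinedByPath3 (l.graph H) x y :=
  ⟨l.center (l.cls x), l.attach (l.cls x) y, l.adj_spoke hx, (l.adj_attach_center _ hy).symm,
    (l.adj_attach_of_mem_rest _ hy).symm,
    fun e => hxy (e ▸ (l.adj_attach_of_mem_rest _ hy).symm),
    fun e => l.center_notMem_rest _ (e ▸ hy)⟩

theorem joinedByPath3_leaf_leaf_of_cls_ne (hx : x ∈ l.leaves) (hy : y ∈ l.leaves)
    (hc : l.cls x ≠ l.cls y) : JoinedByPath3 (l.graph H) x y :=
  ⟨l.center (l.cls x), l.center (l.cls y), l.adj_spoke hx, l.adj_center_center hc,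
    (l.adj_spoke hy).symm, fun e => l.center_notMem_leaves _ (e ▸ hx),
    fun e => l.center_notMem_leaves _ (e ▸ hy)⟩

theorem joinedByPath3_leaf_leaf_of_mate_ne (hx : x ∈ l.leaves) (hy : y ∈ l.leaves)
    (hc : l.cls x = l.cls y) (hm : l.mate x ≠ x) (hxy : ¬ (l.graph H).Adj x y) :
    JoinedByPath3 (l.graph H) x y := by
  have hspoke := l.adj_spoke (H := H) (l.mate_mem x hx)
  rw [l.cls_mate x hx, hc] at hspoke
  exact ⟨l.mate x, l.center (l.cls y), l.adj_mate_of_ne hx hm, hspoke, (l.adj_spoke hy).symm,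
    fun e => l.center_notMem_leaves _ (e ▸ hx), fun e => hxy (e ▸ l.adj_mate_of_ne hx hm)⟩

theorem joinedByPath3_leaf_leaf (hx : x ∈ l.leaves) (hy : y ∈ l.leaves) (hG : G.Adj x y)
    (hxy : ¬ (l.graph H).Adj x y) : JoinedByPath3 (l.graph H) x y := by
  by_cases hc : l.cls x = l.cls y
  · rcases ne_or_eq (l.mate x) x with hmx | hmx
    · exact l.joinedByPath3_leaf_leaf_of_mate_ne hx hy hc hmx hxy
    rcases ne_or_eq (l.mate y) y with hmy | hmy
    · exact (l.joinedByPath3_leaf_leaf_of_mate_ne hy hx hc.symm hmy fun h => hxy h.symm).symm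
    exact absurd hG (l.not_adj_of_mate_eq x hx y hy hc hmx hmy)
  · exact l.joinedByPath3_leaf_leaf_of_cls_ne hx hy hc

theorem joinedByPath3_rest_rest (hH : IsC4SaturatedOn G l.rest H) (hx : x ∈ l.rest)
    (hy : y ∈ l.rest) (hG : G.Adj x y) (hxy : ¬ (l.graph H).Adj x y) :
    JoinedByPath3 (l.graph H) x y := by
  have hle : H ≤ l.graph H := fun u v huv => ⟨huv.ne, Or.inl (.rest huv)⟩
  exact (hH.joined hx hy hG fun h => hxy (hle h)).mono hle

theorem isC4SaturatedOn_graph (hH : IsC4SaturatedOn G l.rest H) :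
    IsC4SaturatedOn G S (l.graph H) := by
  have hsupp := hH.support_subset
  refine ⟨l.graph_le hH.le, l.support_graph_subset hsupp, l.c4Free_graph hsupp hH.c4Free,
    fun u hu v hv hG huv => ?_⟩
  have hvu : ¬ (l.graph H).Adj v u := fun h => huv h.symm
  have hcls : ∀ {x i}, x ∈ l.leaves → ¬ (l.graph H).Adj x (l.center i) → l.cls x ≠ i :=
    fun hx hn e => hn (e ▸ l.adj_spoke hx)
  rcases l.mem_cases hu with hu | hu | ⟨i, rfl⟩ <;>
    rcases l.mem_cases hv with hv | hv | ⟨j, rfl⟩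
  · exact l.joinedByPath3_rest_rest hH hu hv hG huv
  · exact (l.joinedByPath3_leaf_rest hv hu hvu).symm
  · exact l.joinedByPath3_rest_center j hu
  · exact l.joinedByPath3_leaf_rest hu hv huv
  · exact l.joinedByPath3_leaf_leaf hu hv hG huv
  · exact l.joinedByPath3_leaf_center hu (hcls hu huv)
  · exact (l.joinedByPath3_rest_center i hv).symm
  · exact (l.joinedByPath3_leaf_center hv (hcls hv hvu)).symm
  · exact absurd (l.adj_center_center (ne_of_apply_ne l.center hG.ne)) huv

/-- The pairs of leaves matched by `mate`. -/
def matchedPairs : Set (Sym2 V) := (fun x => s(x, l.mate x)) '' {x ∈ l.leaves | l.mate x ≠ x}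

theorem two_mul_ncard_matchedPairs_le [Finite V] :
    2 * l.matchedPairs.ncard ≤ l.leaves.ncard := by
  classical
  set moved := {x ∈ l.leaves.toFinite.toFinset | l.mate x ≠ x} with hmoved
  have hpairs : l.matchedPairs = moved.image fun x => s(x, l.mate x) := by
    simp [matchedPairs, hmoved]
  have hfiber : ∀ e ∈ moved.image fun x => s(x, l.mate x),
      2 ≤ {x ∈ moved | s(x, l.mate x) = e}.card := by
    intro e he
    obtain ⟨x, hx, rfl⟩ := Finset.mem_image.1 he
    have hmx : l.mate x ∈ moved := by
      simp only [hmoved, Finset.mem_filter, Set.Finite.mem_toFinset] at hx ⊢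
      exact ⟨l.mate_mem x hx.1, by simpa only [l.mate_involutive x] using hx.2.symm⟩
    have hne : x ≠ l.mate x := Ne.symm (Finset.mem_filter.1 hx).2
    rw [← Finset.card_pair hne]
    refine Finset.card_le_card fun z hz => Finset.mem_filter.2 ?_
    rcases Finset.mem_insert.1 hz with rfl | hz
    · exact ⟨hx, rfl⟩
    · rw [Finset.mem_singleton.1 hz, l.mate_involutive x]
      exact ⟨hmx, Sym2.eq_swap⟩
  calc 2 * l.matchedPairs.ncard ≤ moved.card := by
        rw [hpairs, Set.ncard_coe_finset]
        exact Finset.mul_card_image_le_card moved 2 hfiber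
    _ ≤ l.leaves.toFinite.toFinset.card := Finset.card_filter_le _ _
    _ = l.leaves.ncard := (Set.ncard_eq_toFinset_card _).symm

/-- The edges that a layer adds: the edges between centres, from the leaves to the centres, between
matched leaves, and from the remaining vertices to the leaves. -/
def edges : Set (Sym2 V) :=
  Set.range (fun i => s(l.center i, l.center (i + 1))) ∪
    (fun x => s(x, l.center (l.cls x))) '' l.leaves ∪ l.matchedPairs ∪
    (fun q : Fin 3 × V => s(q.2, l.attach q.1 q.2)) '' Set.univ ×ˢ l.rest

theorem edgeSet_graph_subset : (l.graph H).edgeSet ⊆ H.edgeSet ∪ l.edges := by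
  have hlink : ∀ u v, u ≠ v → l.Link H u v → s(u, v) ∈ H.edgeSet ∪ l.edges := by
    rintro u v hne (h | ⟨i, j⟩ | h | h | ⟨i, h⟩)
    · exact .inl h
    · have hij : ∀ i j : Fin 3, i ≠ j → j = i + 1 ∨ i = j + 1 := by decide
      refine .inr <| .inl <| .inl <| .inl ?_
      rcases hij i j (ne_of_apply_ne l.center hne) with rfl | rfl
      exacts [⟨i, rfl⟩, ⟨j, Sym2.eq_swap⟩]
    · exact .inr <| .inl <| .inl <| .inr ⟨u, h, rfl⟩
    · exact .inr <| .inl <| .inr ⟨u, ⟨h, hne.symm⟩, rfl⟩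
    · exact .inr <| .inr ⟨(i, u), ⟨trivial, h⟩, rfl⟩
  rintro ⟨u, v⟩ ⟨hne, h | h⟩
  · exact hlink u v hne h
  · rw [show Quot.mk _ (u, v) = s(v, u) from Sym2.eq_swap]
    exact hlink v u hne.symm h

theorem two_mul_ncard_edges_le [Finite V] :
    2 * l.edges.ncard ≤ 6 + 3 * l.leaves.ncard + 6 * l.rest.ncard := by
  have hcenter : (Set.range fun i => s(l.center i, l.center (i + 1))).ncard ≤ 3 := by
    simpa [Set.ncard_univ] using
      Set.ncard_image_le (f := fun i => s(l.center i, l.center (i + 1))) Set.finite_univ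
  have hspoke := Set.ncard_image_le (f := fun x => s(x, l.center (l.cls x))) l.leaves.toFinite
  have hattach := Set.ncard_image_le (f := fun q : Fin 3 × V => s(q.2, l.attach q.1 q.2))
    (Set.univ ×ˢ l.rest).toFinite
  rw [Set.ncard_prod, Set.ncard_univ, Nat.card_fin] at hattach
  have hunion : l.edges.ncard ≤ 3 + l.leaves.ncard + l.matchedPairs.ncard + 3 * l.rest.ncard := by
    refine (Set.ncard_union_le _ _).trans (add_le_add ?_ hattach)
    refine (Set.ncard_union_le _ _).trans (Nat.add_le_add_right ?_ _)
    exact (Set.ncard_union_le _ _).trans (add_le_add hcenter hspoke)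
  linarith [l.two_mul_ncard_matchedPairs_le]

theorem two_mul_ncard_edgeSet_graph_le [Finite V] :
    2 * (l.graph H).edgeSet.ncard ≤ 2 * H.edgeSet.ncard + 3 * S.ncard + 3 * l.rest.ncard := by
  have hunion : (l.graph H).edgeSet.ncard ≤ H.edgeSet.ncard + l.edges.ncard :=
    (Set.ncard_le_ncard l.edgeSet_graph_subset).trans (Set.ncard_union_le _ _)
  linarith [l.two_mul_ncard_edges_le, l.ncard_rest_add_ncard_leaves]

end Layer

/-! ### Constructing a layer -/

section Combinatorics

variable {α β γ : Type*}

theorem exists_maximal_matching [Finite α] (B : α → α → Prop) (hB : ∀ x y, B x y → B y x) :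
    ∃ σ : α → α, Function.Involutive σ ∧ (∀ x, σ x ≠ x → B x (σ x)) ∧
      ∀ x y, x ≠ y → σ x = x → σ y = y → ¬ B x y := by
  classical
  obtain ⟨σ, ⟨hσ, hσB⟩, hmax⟩ := Set.Finite.exists_maximalFor (fun σ : α → α => {x | σ x ≠ x})
    {σ | Function.Involutive σ ∧ ∀ x, σ x ≠ x → B x (σ x)} (Set.toFinite _)
    ⟨id, fun _ => rfl, fun _ h => absurd rfl h⟩
  refine ⟨σ, hσ, hσB, fun x y hxy hx hy hxyB => ?_⟩
  have hcomm : ∀ z, Equiv.swap x y (σ z) = σ (Equiv.swap x y z) := by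
    simpa [hx, hy] using congrFun (hσ.injective.swap_comp x y)
  have hσx : σ (Equiv.swap x y x) = y := by rw [Equiv.swap_apply_left, hy]
  have hσy : σ (Equiv.swap x y y) = x := by rw [Equiv.swap_apply_right, hx]
  have hσz : ∀ z, z ≠ x → z ≠ y → σ (Equiv.swap x y z) = σ z := fun z hzx hzy => by
    rw [Equiv.swap_apply_of_ne_of_ne hzx hzy]
  have hgrow : x ∈ {z | σ z ≠ z} := by
    refine hmax (j := σ ∘ Equiv.swap x y) ⟨fun z => ?_, fun z hz => ?_⟩ (fun z hz => ?_) ?_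
    · rw [Function.comp_apply, Function.comp_apply, hcomm, Equiv.swap_apply_self, hσ]
    · rcases eq_or_ne z x with rfl | hzx
      · simpa only [Function.comp_apply, hσx] using hxyB
      rcases eq_or_ne z y with rfl | hzy
      · simpa only [Function.comp_apply, hσy] using hB _ _ hxyB
      simp only [Function.comp_apply, hσz z hzx hzy] at hz ⊢
      exact hσB z hz
    · have hzx : z ≠ x := fun h => hz (h ▸ hx)
      have hzy : z ≠ y := fun h => hz (h ▸ hy)
      rwa [Set.mem_ofPred_eq, Function.comp_apply, hσz z hzx hzy]
    · rw [Set.mem_ofPred_eq, Function.comp_apply, hσx]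
      exact hxy.symm
  exact hgrow hx

theorem exists_balanced_coloring [Finite α] (D : Set α) {k : ℕ} (hk : 0 < k) :
    ∃ g : α → Fin k, ∀ i, D.ncard / k ≤ {x ∈ D | g x = i}.ncard := by
  have := Fintype.ofFinite D
  have hcard : Fintype.card (Fin k × Fin (D.ncard / k)) ≤ Fintype.card D := by
    rw [Fintype.card_prod, Fintype.card_fin, Fintype.card_fin, Set.fintypeCard_eq_ncard]
    exact Nat.mul_div_le _ _
  obtain ⟨φ⟩ := Function.Embedding.nonempty_of_card_le hcard
  have hφ : Function.Injective fun q => (φ q : α) := Subtype.val_injective.comp φ.injective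
  refine ⟨Function.extend (fun q => (φ q : α)) Prod.fst fun _ => ⟨0, hk⟩, fun i => ?_⟩
  calc D.ncard / k = ((fun m => (φ (i, m) : α)) '' Set.univ).ncard := by
        have hφi : Function.Injective fun m => (φ (i, m) : α) :=
          hφ.comp (Prod.mk_right_injective i)
        rw [Set.ncard_image_of_injective _ hφi, Set.ncard_univ, Nat.card_fin]
    _ ≤ _ := by
        refine Set.ncard_le_ncard ?_
        rintro _ ⟨m, -, rfl⟩
        exact ⟨(φ (i, m)).2, hφ.extend_apply _ _ (i, m)⟩

theorem exists_injective_comp_of_expansion [Fintype α] [DecidableEq β] [DecidableEq γ]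
    {k j : ℕ} (N : α → Finset β) (u : β → γ) (hk : 0 < k)
    (hu : ∀ B : Finset β, B.card ≤ k * (B.image u).card) (hdeg : ∀ y, k * j ≤ (N y).card)
    (hexp : ∀ Y : Finset α, Y.card = j → k * Fintype.card α ≤ (Y.biUnion N).card) :
    ∃ f : α → β, (∀ y, f y ∈ N y) ∧ Function.Injective (u ∘ f) := by
  have hhall : ∀ Y : Finset α, Y.card ≤ (Y.biUnion fun y => (N y).image u).card := by
    intro Y
    refine le_of_mul_le_mul_left ?_ hk
    rw [← Finset.biUnion_image]
    refine le_trans ?_ (hu _)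
    rcases Y.eq_empty_or_nonempty with rfl | ⟨y, hy⟩
    · simp
    rcases le_total Y.card j with hYj | hjY
    · calc k * Y.card ≤ k * j := Nat.mul_le_mul_left k hYj
        _ ≤ (N y).card := hdeg y
        _ ≤ (Y.biUnion N).card := Finset.card_le_card (Finset.subset_biUnion_of_mem N hy)
    · obtain ⟨Y₀, hY₀, hcard⟩ := Finset.exists_subset_card_eq hjY
      calc k * Y.card ≤ k * Fintype.card α := Nat.mul_le_mul_left k Y.card_le_univ
        _ ≤ (Y₀.biUnion N).card := hexp Y₀ hcard
        _ ≤ (Y.biUnion N).card :=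
          Finset.card_le_card (Finset.biUnion_subset_biUnion_of_subset_left N hY₀)
  obtain ⟨g, hg, hgN⟩ := (Finset.all_card_le_biUnion_card_iff_exists_injective _).1 hhall
  choose f hfN hfg using fun y => Finset.mem_image.1 (hgN y)
  exact ⟨f, hfN, by rwa [show u ∘ f = g from funext hfg]⟩

theorem card_le_two_mul_card_image_sym2 [DecidableEq α] (σ : α → α)
    (B : Finset α) : B.card ≤ 2 * (B.image fun x => s(x, σ x)).card := by
  refine Finset.card_le_mul_card_image B 2 fun e he => ?_
  obtain ⟨x, -, rfl⟩ := Finset.mem_image.1 he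
  refine le_trans (Finset.card_le_card fun z hz => ?_) (Finset.card_le_two (a := x) (b := σ x))
  have hz := (Finset.mem_filter.1 hz).2
  grind

end Combinatorics

namespace CenterTriangle

variable {V : Type*} {G : SimpleGraph V} {S : Set V} (t : CenterTriangle G S)

/-- The leaves adjacent to centre `i` but not to centre `i + 1` (cyclically). -/
def descentLeaves (i : Fin 3) : Set V :=
  {x ∈ t.leaves | G.Adj x (t.center i) ∧ ¬ G.Adj x (t.center (i + 1))}

/-- The leaves adjacent to all three centres. -/
def fullLeaves : Set V := {x ∈ t.leaves | ∀ i, G.Adj x (t.center i)}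

end CenterTriangle

theorem existsUnique_cyclic_descent (b : Fin 3 → Prop) (htrue : ∃ i, b i) (hfalse : ∃ i, ¬ b i) :
    ∃! i, b i ∧ ¬ b (i + 1) := by
  have key : ∀ b : Fin 3 → Bool, (∃ i, b i) → (∃ i, ¬ b i) →
      ∃ i, (b i ∧ ¬ b (i + 1)) ∧ ∀ j, b j ∧ ¬ b (j + 1) → j = i := by decide
  classical
  simpa [ExistsUnique] using
    key (fun i => decide (b i)) (by simpa using htrue) (by simpa using hfalse)

namespace CenterTriangle

variable {V : Type*} {G : SimpleGraph V} {S : Set V} (t : CenterTriangle G S)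

theorem exists_leafClass [Finite V] :
    ∃ c : V → Fin 3, (∀ x ∈ t.leaves, G.Adj x (t.center (c x))) ∧
      (∀ i, ∀ x ∈ t.descentLeaves i, c x = i) ∧
      ∀ i, (t.descentLeaves i).ncard + t.fullLeaves.ncard / 3 ≤
        {x ∈ t.leaves | c x = i}.ncard := by
  classical
  obtain ⟨g, hg⟩ := exists_balanced_coloring t.fullLeaves three_pos
  have hdescent : ∀ x ∈ t.leaves, x ∉ t.fullLeaves →
      ∃! i, G.Adj x (t.center i) ∧ ¬ G.Adj x (t.center (i + 1)) := fun x hx hfull =>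
    existsUnique_cyclic_descent _ hx.2.2 (by simpa [fullLeaves, hx] using hfull)
  choose! d hd hd_unique using hdescent
  have hdisj : ∀ i, ∀ x ∈ t.descentLeaves i, x ∉ t.fullLeaves := fun i x hx hfull =>
    hx.2.2 (hfull.2 (i + 1))
  have hc_descent : ∀ i, ∀ x ∈ t.descentLeaves i,
      (if x ∈ t.fullLeaves then g x else d x) = i := fun i x hx => by
    rw [if_neg (hdisj i x hx), hd_unique x hx.1 (hdisj i x hx) i hx.2]
  refine ⟨fun x => if x ∈ t.fullLeaves then g x else d x, fun x hx => ?_, hc_descent, fun i => ?_⟩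
  · by_cases hfull : x ∈ t.fullLeaves
    · exact hfull.2 _
    · simpa only [if_neg hfull] using (hd x hx hfull).1
  · calc (t.descentLeaves i).ncard + t.fullLeaves.ncard / 3
        ≤ (t.descentLeaves i).ncard + {x ∈ t.fullLeaves | g x = i}.ncard := by gcongr; exact hg i
      _ = (t.descentLeaves i ∪ {x ∈ t.fullLeaves | g x = i}).ncard :=
        (Set.ncard_union_eq (Set.disjoint_left.2 fun x hx hx' => hdisj i x hx hx'.1)).symm
      _ ≤ _ := by
        refine Set.ncard_le_ncard (Set.union_subset (fun x hx => ?_) fun x hx => ?_)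
        exacts [⟨hx.1, hc_descent i x hx⟩, ⟨hx.1.1, (if_pos hx.1).trans hx.2⟩]

theorem exists_attach [Finite V] {c : V → Fin 3} {j : ℕ} (σ : V → V) (i : Fin 3)
    (hc : ∀ x ∈ t.descentLeaves i, c x = i)
    (hcard : (t.descentLeaves i).ncard + t.fullLeaves.ncard / 3 ≤ {x ∈ t.leaves | c x = i}.ncard)
    (hdeg : ∀ y ∈ t.rest, 2 * j ≤ {x ∈ t.descentLeaves i | G.Adj y x}.ncard)
    (hexp : ∀ Y : Finset V, ↑Y ⊆ t.rest → Y.card = j →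
      2 * t.rest.ncard + {x ∈ t.leaves | ∀ y ∈ Y, ¬ G.Adj y x}.ncard ≤
        (t.descentLeaves i).ncard + t.fullLeaves.ncard / 3) :
    ∃ f : V → V, (∀ y ∈ t.rest, f y ∈ t.leaves ∧ c (f y) = i ∧ G.Adj y (f y)) ∧
      Set.InjOn (fun y => s(f y, σ (f y))) t.rest := by
  classical
  have := Fintype.ofFinite V
  let N : t.rest → Finset V := fun y => {x | x ∈ t.leaves ∧ c x = i ∧ G.Adj y x}
  have hdegN : ∀ y, 2 * j ≤ (N y).card := fun y => by
    refine (hdeg y y.2).trans ?_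
    rw [← Set.ncard_coe_finset]
    refine Set.ncard_le_ncard fun x hx => ?_
    simp only [N, Finset.coe_filter, Finset.mem_univ, true_and]
    exact ⟨hx.1.1, hc x hx.1, hx.2⟩
  have hexpN : ∀ Y : Finset t.rest, Y.card = j →
      2 * Fintype.card t.rest ≤ (Y.biUnion N).card := fun Y hY => by
    have hclass : {x ∈ t.leaves | c x = i} ⊆
        {x ∈ t.leaves | ∀ y ∈ Y.map (.subtype _), ¬ G.Adj y x} ∪ Y.biUnion N := fun x hx => by
      by_cases hY : ∃ y ∈ Y, G.Adj y x
      · obtain ⟨y, hyY, hyx⟩ := hY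
        exact Or.inr (Finset.mem_biUnion.2 ⟨y, hyY, by simpa [N] using ⟨hx.1, hx.2, hyx⟩⟩)
      · refine Or.inl ⟨hx.1, fun y hy hyx => hY ?_⟩
        obtain ⟨y, hyY, rfl⟩ := Finset.mem_map.1 hy
        exact ⟨y, hyY, hyx⟩
    have := hexp (Y.map (.subtype _)) (by simp) (by rw [Finset.card_map, hY])
    have := (Set.ncard_le_ncard hclass).trans (Set.ncard_union_le _ _)
    rw [Set.ncard_coe_finset] at this
    rw [Set.fintypeCard_eq_ncard]
    lia
  obtain ⟨f, hfN, hf⟩ := exists_injective_comp_of_expansion N (fun x => s(x, σ x)) two_pos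
    (card_le_two_mul_card_image_sym2 σ) hdegN hexpN
  have hext : ∀ y (hy : y ∈ t.rest), Function.extend Subtype.val f id y = f ⟨y, hy⟩ :=
    fun y hy => Subtype.val_injective.extend_apply f id ⟨y, hy⟩
  refine ⟨Function.extend Subtype.val f id, fun y hy => ?_, fun y hy z hz hyz => ?_⟩
  · simpa [N, hext y hy] using hfN ⟨y, hy⟩
  · simp only [hext y hy, hext z hz] at hyz
    exact congrArg Subtype.val (hf hyz)

theorem exists_layer [Finite V] {j : ℕ}
    (hdeg : ∀ i, ∀ y ∈ t.rest, 2 * j ≤ {x ∈ t.descentLeaves i | G.Adj y x}.ncard)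
    (hexp : ∀ i, ∀ Y : Finset V, ↑Y ⊆ t.rest → Y.card = j →
      2 * t.rest.ncard + {x ∈ t.leaves | ∀ y ∈ Y, ¬ G.Adj y x}.ncard ≤
        (t.descentLeaves i).ncard + t.fullLeaves.ncard / 3) :
    ∃ l : Layer G S, l.toCenterTriangle = t := by
  obtain ⟨c, hadj, hdescent, hcard⟩ := t.exists_leafClass
  obtain ⟨σ, hσ, hσB, hmax⟩ := exists_maximal_matching
    (fun x y => x ∈ t.leaves ∧ y ∈ t.leaves ∧ c x = c y ∧ G.Adj x y)
    fun x y ⟨hx, hy, hxy, h⟩ => ⟨hy, hx, hxy.symm, h.symm⟩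
  choose f hf hfinj using fun i =>
    t.exists_attach σ i (hdescent i) (hcard i) (hdeg i) (hexp i)
  refine ⟨{ t with
    cls := c
    adj_center_cls := hadj
    mate := σ
    mate_involutive := hσ
    mate_mem := fun x hx => ?_
    cls_mate := fun x _ => ?_
    adj_mate := fun x _ hne => (hσB x hne).2.2.2
    not_adj_of_mate_eq := fun x hx y hy hxy hσx hσy h =>
      hmax x y h.ne hσx hσy ⟨hx, hy, hxy, h⟩
    attach := f
    attach_mem := fun i y hy => (hf i y hy).1
    cls_attach := fun i y hy => (hf i y hy).2.1
    adj_attach := fun i y hy => (hf i y hy).2.2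
    attach_injOn := hfinj }, rfl⟩
  · rcases eq_or_ne (σ x) x with h | h
    exacts [h.symm ▸ hx, (hσB x h).2.1]
  · rcases eq_or_ne (σ x) x with h | h
    exacts [congrArg c h, (hσB x h).2.2.1.symm]

end CenterTriangle

/-! ### Typical graphs -/

section Typical

variable {V : Type*} {G : SimpleGraph V} {A T : Finset V} {p η : ℝ} {s t : ℕ}

/-- The vertices outside `T` that are adjacent to every vertex of `A` and to no vertex of `T`. -/
def extensionSet (G : SimpleGraph V) (A T : Finset V) : Set V :=
  {x | x ∉ T ∧ (∀ a ∈ A, G.Adj x a) ∧ ∀ b ∈ T, ¬ G.Adj x b}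

/-- Pseudorandomness of density `p`: whenever `A` has at most `s` and `T` at most `t` vertices, the
size of `extensionSet G A T` is within a factor `1 ± η` of its typical value. -/
def IsTypical (G : SimpleGraph V) (p η : ℝ) (s t : ℕ) : Prop :=
  ∀ A T : Finset V, Disjoint A T → A.card ≤ s → T.card ≤ t →
    |(extensionSet G A T).ncard - p ^ A.card * (1 - p) ^ T.card * Nat.card V| ≤
      η * (p ^ A.card * (1 - p) ^ T.card * Nat.card V)

theorem mem_extensionSet_empty {x : V} :
    x ∈ extensionSet G ∅ T ↔ x ∉ T ∧ ∀ b ∈ T, ¬ G.Adj x b := by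
  simp [extensionSet]

theorem extensionSet_empty_empty : extensionSet G ∅ ∅ = Set.univ := by
  simp [extensionSet]

namespace IsTypical

theorem ncard_le (hG : IsTypical G p η s t) (hAT : Disjoint A T) (hA : A.card ≤ s)
    (hT : T.card ≤ t) :
    ((extensionSet G A T).ncard : ℝ) ≤
      (1 + η) * (p ^ A.card * (1 - p) ^ T.card * Nat.card V) := by
  linarith [(abs_le.1 (hG A T hAT hA hT)).2]

theorem le_ncard (hG : IsTypical G p η s t) (hAT : Disjoint A T) (hA : A.card ≤ s)
    (hT : T.card ≤ t) :
    (1 - η) * (p ^ A.card * (1 - p) ^ T.card * Nat.card V) ≤ (extensionSet G A T).ncard := by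
  linarith [(abs_le.1 (hG A T hAT hA hT)).1]

theorem nonempty_extensionSet [Finite V] [Nonempty V] (hG : IsTypical G p η s t) (hp0 : 0 < p)
    (hp1 : p < 1) (hη : η < 1) (hAT : Disjoint A T) (hA : A.card ≤ s) (hT : T.card ≤ t) :
    (extensionSet G A T).Nonempty := by
  have hV : (0 : ℝ) < Nat.card V := by exact_mod_cast Nat.card_pos
  have hpos : 0 < (1 - η) * (p ^ A.card * (1 - p) ^ T.card * Nat.card V) := by
    have := sub_pos.2 hp1
    have := sub_pos.2 hη
    positivity
  rw [← Set.ncard_pos]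
  exact_mod_cast hpos.trans_le (hG.le_ncard hAT hA hT)

end IsTypical

namespace CenterTriangle

theorem nonempty_of_nonempty_extensionSet
    (h : ∀ A : Finset V, Disjoint A T → A.card ≤ 2 → (extensionSet G A T).Nonempty) :
    Nonempty (CenterTriangle G (extensionSet G ∅ T)) := by
  classical
  obtain ⟨a, haT, -, ha⟩ := h ∅ (Finset.disjoint_empty_left T) (by simp)
  obtain ⟨b, hbT, hba, hb⟩ := h {a} (by simpa using haT) (by simp)
  obtain ⟨c, hcT, hcab, hc⟩ := h {a, b} (by simp [haT, hbT]) Finset.card_le_two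
  simp only [Finset.mem_insert, Finset.mem_singleton, forall_eq_or_imp, forall_eq] at hba hcab
  refine ⟨⟨![a, b, c], fun i => mem_extensionSet_empty.2 ?_, fun i k => ?_⟩⟩
  · fin_cases i
    exacts [⟨haT, ha⟩, ⟨hbT, hb⟩, ⟨hcT, hc⟩]
  · fin_cases i <;> fin_cases k <;> simp [hba, hba.symm, hcab, hcab.1.symm, hcab.2.symm]

variable (l : CenterTriangle G (extensionSet G ∅ T)) (i : Fin 3)

/-- The set of the three centres. -/
def centers {S : Set V} (l : CenterTriangle G S) : Finset V :=
  Finset.univ.map ⟨l.center, l.center_injective⟩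

theorem card_centers : l.centers.card = 3 := by
  rw [centers, Finset.card_map, Finset.card_univ, Fintype.card_fin]

theorem center_notMem : l.center i ∉ T := (l.center_mem i).1

theorem disjoint_centers : Disjoint l.centers T := by
  simpa [centers, Finset.disjoint_left] using l.center_notMem

theorem rest_eq_extensionSet [DecidableEq V] : l.rest = extensionSet G ∅ (l.centers ∪ T) := by
  ext x
  have hx : x ∈ l.rest → ∀ i, l.center i ≠ x := fun hx i h => l.center_notMem_rest i (h ▸ hx)
  simp only [rest, Set.mem_ofPred_eq, mem_extensionSet_empty, centers, Finset.mem_union,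
    Finset.mem_map, Finset.mem_univ, true_and, Function.Embedding.coeFn_mk] at hx ⊢
  grind

theorem fullLeaves_eq_extensionSet : l.fullLeaves = extensionSet G l.centers T := by
  ext x
  have hne : (∀ i, G.Adj x (l.center i)) → ¬ ∃ i, l.center i = x :=
    fun h ⟨i, hi⟩ => (h i).ne hi.symm
  have hex : (∀ i, G.Adj x (l.center i)) → ∃ i, G.Adj x (l.center i) := fun h => ⟨0, h 0⟩
  simp only [fullLeaves, leaves, Set.mem_ofPred_eq, mem_extensionSet_empty, Set.mem_range]
  simp only [extensionSet, centers, Set.mem_ofPred_eq, Finset.mem_map, Finset.mem_univ, true_and,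
    Function.Embedding.coeFn_mk, forall_exists_index, forall_apply_eq_imp_iff]
  tauto

theorem descentLeaves_eq_extensionSet [DecidableEq V] :
    l.descentLeaves i = extensionSet G {l.center i} (insert (l.center (i + 1)) T) := by
  ext x
  have hrange : ¬ G.Adj x (l.center (i + 1)) →
      ((∃ k, l.center k = x) ↔ x = l.center (i + 1)) := fun h => by
    refine ⟨fun ⟨k, hk⟩ => ?_, fun hx => ⟨i + 1, hx.symm⟩⟩
    rw [← hk, of_not_not fun hne : k ≠ i + 1 => h (hk ▸ l.center_adj hne)]
  have hex : G.Adj x (l.center i) → ∃ k, G.Adj x (l.center k) := fun h => ⟨i, h⟩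
  simp only [descentLeaves, leaves, Set.mem_ofPred_eq, mem_extensionSet_empty, Set.mem_range]
  simp only [extensionSet, Set.mem_ofPred_eq, Finset.mem_insert, Finset.mem_singleton,
    forall_eq_or_imp, forall_eq]
  tauto

theorem adj_descentLeaves_eq_extensionSet [DecidableEq V] (y : V) :
    {x ∈ l.descentLeaves i | G.Adj y x} =
      extensionSet G {y, l.center i} (insert (l.center (i + 1)) T) := by
  ext x
  rw [descentLeaves_eq_extensionSet]
  simp only [extensionSet, Set.mem_ofPred_eq, Finset.mem_insert, Finset.mem_singleton,
    G.adj_comm y]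
  grind

theorem nonadj_leaves_subset_extensionSet [DecidableEq V] {Y : Finset V} (hY : ↑Y ⊆ l.rest) :
    {x ∈ l.leaves | ∀ y ∈ Y, ¬ G.Adj y x} ⊆ extensionSet G ∅ (Y ∪ T) := fun x ⟨hx, hxY⟩ => by
  have hxT := mem_extensionSet_empty.1 hx.1
  rw [mem_extensionSet_empty]
  refine ⟨fun h => (Finset.mem_union.1 h).elim
    (fun h => Set.disjoint_left.1 l.disjoint_rest_leaves (hY h) hx) hxT.1, fun b hb => ?_⟩
  exact (Finset.mem_union.1 hb).elim (fun hb h => hxY b hb h.symm) (hxT.2 b)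

end CenterTriangle

end Typical

/-! ### Saturated subgraphs of typical graphs -/

section Saturation

variable {V : Type*} {G : SimpleGraph V} {T : Finset V} {p η : ℝ} {t : ℕ}

namespace CenterTriangle

variable (l : CenterTriangle G (extensionSet G ∅ T)) (hG : IsTypical G p η 3 t) (i : Fin 3)
include hG

theorem ncard_rest_le (hT : T.card + 3 ≤ t) :
    (l.rest.ncard : ℝ) ≤ (1 + η) * ((1 - p) ^ 3 * ((1 - p) ^ T.card * Nat.card V)) := by
  classical
  have hcard : (l.centers ∪ T).card = 3 + T.card := by
    rw [Finset.card_union_of_disjoint l.disjoint_centers, card_centers]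
  have := hG.ncard_le (Finset.disjoint_empty_left (l.centers ∪ T)) (by simp) (by lia)
  rwa [Finset.card_empty, pow_zero, one_mul, hcard, pow_add, mul_assoc ((1 - p) ^ 3),
    ← rest_eq_extensionSet] at this

theorem le_ncard_fullLeaves (hT : T.card ≤ t) :
    (1 - η) * (p ^ 3 * ((1 - p) ^ T.card * Nat.card V)) ≤ l.fullLeaves.ncard := by
  have := hG.le_ncard l.disjoint_centers l.card_centers.le hT
  rwa [card_centers, mul_assoc (p ^ 3), ← fullLeaves_eq_extensionSet] at this

theorem le_ncard_descentLeaves (hT : T.card + 1 ≤ t) :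
    (1 - η) * (p * (1 - p) * ((1 - p) ^ T.card * Nat.card V)) ≤ (l.descentLeaves i).ncard := by
  classical
  have hcard : (insert (l.center (i + 1)) T).card = T.card + 1 :=
    Finset.card_insert_of_notMem (l.center_notMem _)
  have hdisj : Disjoint {l.center i} (insert (l.center (i + 1)) T) := by
    simp [l.center_notMem, l.center_injective.eq_iff]
  have := hG.le_ncard hdisj (by simp) (by lia)
  rwa [Finset.card_singleton, hcard, ← descentLeaves_eq_extensionSet, pow_one, pow_succ',
    ← mul_assoc p, mul_assoc (p * (1 - p))] at this

theorem le_ncard_adj_descentLeaves (hT : T.card + 1 ≤ t) {y : V} (hy : y ∈ l.rest) :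
    (1 - η) * (p ^ 2 * (1 - p) * ((1 - p) ^ T.card * Nat.card V)) ≤
      {x ∈ l.descentLeaves i | G.Adj y x}.ncard := by
  classical
  have hne : ∀ k, y ≠ l.center k := fun k h => l.center_notMem_rest k (h ▸ hy)
  have hcard : (insert (l.center (i + 1)) T).card = T.card + 1 :=
    Finset.card_insert_of_notMem (l.center_notMem _)
  have hdisj : Disjoint {y, l.center i} (insert (l.center (i + 1)) T) := by
    simp [(hne _).symm, hy.1.1, l.center_notMem, l.center_injective.eq_iff]
  have := hG.le_ncard hdisj (Finset.card_le_two.trans (by simp)) (by lia)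
  rwa [Finset.card_pair (hne i), hcard, ← adj_descentLeaves_eq_extensionSet, pow_succ' _ T.card,
    ← mul_assoc (p ^ 2), mul_assoc (p ^ 2 * (1 - p))] at this

theorem ncard_nonadj_leaves_le [Finite V] {Y : Finset V} (hT : Y.card + T.card ≤ t)
    (hY : ↑Y ⊆ l.rest) :
    ({x ∈ l.leaves | ∀ y ∈ Y, ¬ G.Adj y x}.ncard : ℝ) ≤
      (1 + η) * ((1 - p) ^ Y.card * ((1 - p) ^ T.card * Nat.card V)) := by
  classical
  have hcard : (Y ∪ T).card = Y.card + T.card :=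
    Finset.card_union_of_disjoint (Finset.disjoint_left.2 fun y hy => (hY hy).1.1)
  have := hG.ncard_le (Finset.disjoint_empty_left (Y ∪ T)) (by simp) (by lia)
  rw [Finset.card_empty, pow_zero, one_mul, hcard, pow_add, mul_assoc] at this
  refine le_trans ?_ this
  exact_mod_cast Set.ncard_le_ncard (l.nonadj_leaves_subset_extensionSet hY)

end CenterTriangle

namespace IsTypical

theorem nonempty_layer [Finite V] {j : ℕ} (hG : IsTypical G p η 3 t) (hp0 : 0 < p) (hp1 : p < 1)
    (hη : η < 1) (hT3 : T.card + 3 ≤ t) (hTj : T.card + j ≤ t) {w : ℝ}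
    (hw : (1 - p) ^ T.card * Nat.card V = w) (hw0 : 0 < w)
    (hdeg : 2 * j ≤ (1 - η) * (p ^ 2 * (1 - p) * w))
    (hexp : 2 * ((1 + η) * ((1 - p) ^ 3 * w)) + (1 + η) * ((1 - p) ^ j * w) + 1 ≤
      (1 - η) * ((1 - (1 - p) ^ 3) / 3 * w)) :
    Nonempty (Layer G (extensionSet G ∅ T)) := by
  have : Nonempty V := not_isEmpty_iff.1 fun _ => by simp [← hw] at hw0
  obtain ⟨l⟩ := CenterTriangle.nonempty_of_nonempty_extensionSet (T := T) fun A hAT hA =>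
    hG.nonempty_extensionSet hp0 hp1 hη hAT (by lia) (by lia)
  have hadj : ∀ i, ∀ y ∈ l.rest, 2 * j ≤ {x ∈ l.descentLeaves i | G.Adj y x}.ncard :=
    fun i y hy => by
      have := l.le_ncard_adj_descentLeaves hG i (by lia) hy
      rw [hw] at this
      exact_mod_cast hdeg.trans this
  have hnonadj : ∀ i, ∀ Y : Finset V, ↑Y ⊆ l.rest → Y.card = j →
      2 * l.rest.ncard + {x ∈ l.leaves | ∀ y ∈ Y, ¬ G.Adj y x}.ncard ≤
        (l.descentLeaves i).ncard + l.fullLeaves.ncard / 3 := fun i Y hY hYj => by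
    have hrest := l.ncard_rest_le hG hT3
    have hdescent := l.le_ncard_descentLeaves hG i (by lia)
    have hfull := l.le_ncard_fullLeaves hG (by lia)
    have hYle := l.ncard_nonadj_leaves_le hG (by lia) hY
    have hdiv : (l.fullLeaves.ncard : ℝ) ≤ 3 * (l.fullLeaves.ncard / 3 : ℕ) + 3 := by
      exact_mod_cast show _ ≤ 3 * (l.fullLeaves.ncard / 3) + 3 by lia
    have hident : p * (1 - p) + p ^ 3 / 3 = (1 - (1 - p) ^ 3) / 3 := by ring
    rw [hw] at hrest hdescent hfull hYle
    rw [hYj] at hYle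
    rw [← hident] at hexp
    generalize l.fullLeaves.ncard / 3 = f at hdiv ⊢
    rify
    linarith
  exact ⟨(l.exists_layer hadj hnonadj).choose⟩

end IsTypical

/-- The limiting number of edges per vertex: a layer spends `3 * (1 + Q) / 2` edges per vertex and
leaves a proportion `Q` of the vertices to the next layer. -/
noncomputable def saturationConst (Q : ℝ) : ℝ := 3 * (1 + Q) / (2 * (1 - Q))

theorem saturationConst_eq_layer_add {Q : ℝ} (hQ : Q ≠ 1) :
    saturationConst Q = 3 / 2 * (1 + Q) + Q * saturationConst Q := by
  have := sub_ne_zero.2 hQ.symm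
  rw [saturationConst]
  field_simp
  ring

theorem saturationConst_pos {Q : ℝ} (hQ0 : 0 ≤ Q) (hQ1 : Q < 1) : 0 < saturationConst Q :=
  div_pos (by linarith) (by linarith)

namespace IsTypical

variable [Finite V] {j m d : ℕ} (hG : IsTypical G p η 3 (m + j)) (hp0 : 0 < p) (hp1 : p < 1)
  (hη0 : 0 ≤ η) (hη1 : η < 1)
  (hQ : 2 * ((1 + η) * (1 - p) ^ 3) + 3 * η ≤ (1 - η) * ((1 - (1 - p) ^ 3) / 3))
  (hj : (1 - p) ^ j ≤ η) (hdeg : 2 * j ≤ (1 - η) * (p ^ 2 * (1 - p) * ((1 - p) ^ m * Nat.card V)))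
  (hcard : 1 ≤ η * ((1 - p) ^ m * Nat.card V))
include hG hp0 hp1 hη0 hη1 hQ hj hdeg hcard

theorem exists_isC4SaturatedOn (hTd : T.card + 3 * d = m) :
    ∃ H, IsC4SaturatedOn G (extensionSet G ∅ T) H ∧
      (H.edgeSet.ncard : ℝ) ≤
        (1 + η) * (saturationConst ((1 - p) ^ 3) * ((1 - p) ^ T.card * Nat.card V)) +
          ((1 + η) * ((1 - p) ^ m * Nat.card V)) ^ 2 := by
  classical
  have hq0 : 0 < 1 - p := sub_pos.2 hp1
  have hq1 : 1 - p < 1 := sub_lt_self 1 hp0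
  have hQ1 : (1 - p) ^ 3 < 1 := pow_lt_one₀ hq0.le hq1 three_ne_zero
  have hS : ((extensionSet G ∅ T).ncard : ℝ) ≤ (1 + η) * ((1 - p) ^ T.card * Nat.card V) := by
    simpa using hG.ncard_le (Finset.disjoint_empty_left T) (by simp) (by lia)
  induction d generalizing T with
  | zero =>
    obtain ⟨H, hH⟩ := exists_isC4SaturatedOn G (extensionSet G ∅ T)
    have hle : (H.edgeSet.ncard : ℝ) ≤ ((extensionSet G ∅ T).ncard : ℝ) ^ 2 := by
      exact_mod_cast ncard_edgeSet_le_sq hH.support_subset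
    have hconst := (saturationConst_pos (pow_pos hq0 3).le hQ1).le
    rw [mul_zero, add_zero] at hTd
    subst hTd
    refine ⟨H, hH, (hle.trans (by gcongr)).trans (le_add_of_nonneg_left (by positivity))⟩
  | succ d ih =>
    obtain ⟨w, hw⟩ : ∃ w, (1 - p) ^ T.card * (Nat.card V : ℝ) = w := ⟨_, rfl⟩
    have hmw : (1 - p) ^ m * Nat.card V ≤ w := by
      rw [← hw]
      exact mul_le_mul_of_nonneg_right (pow_le_pow_of_le_one hq0.le hq1.le (by lia)) (by simp)
    have hη : 1 ≤ η * w := hcard.trans (by gcongr)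
    have hw0 : 0 < w := pos_of_mul_pos_right (one_pos.trans_le hη) hη0
    obtain ⟨l⟩ := hG.nonempty_layer hp0 hp1 hη1 (by lia) (by lia : T.card + j ≤ m + j) hw hw0
      (hdeg.trans (by gcongr)) (by nlinarith)
    have hT : (l.centers ∪ T).card = 3 + T.card := by
      rw [Finset.card_union_of_disjoint l.disjoint_centers, l.card_centers]
    have hrest := l.ncard_rest_le hG (by lia)
    obtain ⟨H, hH, hHcard⟩ := ih (T := l.centers ∪ T) (by lia) (by
      rwa [← l.rest_eq_extensionSet, hT, pow_add, mul_assoc])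
    rw [← l.rest_eq_extensionSet] at hH
    refine ⟨l.graph H, l.isC4SaturatedOn_graph hH, ?_⟩
    have hgraph : 2 * ((l.graph H).edgeSet.ncard : ℝ) ≤ 2 * H.edgeSet.ncard +
        3 * (extensionSet G ∅ T).ncard + 3 * l.rest.ncard := by
      exact_mod_cast l.two_mul_ncard_edgeSet_graph_le
    rw [hT, pow_add, mul_assoc ((1 - p) ^ 3)] at hHcard
    rw [saturationConst_eq_layer_add hQ1.ne]
    linarith

theorem satNum_le (hd : 3 * d = m) :
    (satNum G (cycGraph 4) : ℝ) ≤
      (1 + η) * (saturationConst ((1 - p) ^ 3) * Nat.card V) +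
        ((1 + η) * ((1 - p) ^ m * Nat.card V)) ^ 2 := by
  obtain ⟨H, hH, hcardH⟩ := hG.exists_isC4SaturatedOn hp0 hp1 hη0 hη1 hQ hj hdeg hcard
    (T := ∅) (by rw [Finset.card_empty, zero_add, hd])
  rw [extensionSet_empty_empty] at hH
  rw [Finset.card_empty, pow_zero, one_mul] at hcardH
  exact (Nat.cast_le.2 (satNum_le_ncard_edgeSet hH.isSaturatedIn)).trans hcardH

end IsTypical

end Saturation

/-! ### Concentration for sums of independent indicators -/

section Concentration

open ProbabilityTheory

variable {Ω ι : Type*} [MeasurableSpace Ω] {μ : Measure Ω} [IsProbabilityMeasure μ]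

theorem mgf_indicator_one {E : Set Ω} (hE : MeasurableSet E) (t : ℝ) :
    mgf (E.indicator 1) μ t = 1 + (exp t - 1) * μ.real E := by
  have hexp : ∀ ω, exp (t * E.indicator 1 ω) = 1 + E.indicator (fun _ => exp t - 1) ω := fun ω => by
    by_cases hω : ω ∈ E <;> simp [hω]
  simp_rw [mgf, hexp]
  rw [integral_add (integrable_const _) ((integrable_const _).indicator hE),
    integral_indicator_const _ hE, integral_const, probReal_univ, one_smul, smul_eq_mul, mul_comm]

theorem mgf_indicator_one_le {E : Set Ω} (hE : MeasurableSet E) {t : ℝ} (ht : |t| ≤ 1) :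
    mgf (E.indicator 1) μ t ≤ exp (μ.real E * (t + t ^ 2)) := by
  have hexp : exp t - 1 ≤ t + t ^ 2 := by
    linarith [(abs_le.1 (abs_exp_sub_one_sub_id_le ht)).2]
  calc mgf (E.indicator 1) μ t = (exp t - 1) * μ.real E + 1 := by
        rw [mgf_indicator_one hE, add_comm]
    _ ≤ μ.real E * (t + t ^ 2) + 1 := by
        rw [mul_comm]
        gcongr
    _ ≤ exp (μ.real E * (t + t ^ 2)) := add_one_le_exp _

variable [Fintype ι] {E : ι → Set Ω} (hE : ∀ i, MeasurableSet (E i))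
include hE

theorem integrable_exp_mul_sum_indicator_one (t : ℝ) :
    Integrable (fun ω => exp (t * (∑ i, (E i).indicator 1) ω)) μ := by
  refine integrable_exp_mul_of_mem_Icc (a := 0) (b := ∑ _i : ι, 1)
    (Finset.aemeasurable_sum _ fun i _ => (measurable_one.indicator (hE i)).aemeasurable)
    (.of_forall fun ω => ?_)
  rw [Finset.sum_apply]
  exact ⟨Finset.sum_nonneg fun i _ => Set.indicator_nonneg (fun _ _ => zero_le_one) _,
    Finset.sum_le_sum fun i _ => Set.indicator_le_self' (fun _ _ => zero_le_one) _⟩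

variable (hindep : iIndepSet E μ)
include hindep

theorem mgf_sum_indicator_one_le {t : ℝ} (ht : |t| ≤ 1) :
    mgf (∑ i, (E i).indicator 1) μ t ≤ exp ((∑ i, μ.real (E i)) * (t + t ^ 2)) := by
  have hfun : iIndepFun (fun i => (E i).indicator (1 : Ω → ℝ)) μ := hindep.iIndepFun_indicator
  rw [hfun.mgf_sum fun i => measurable_one.indicator (hE i), Finset.sum_mul, exp_sum]
  exact Finset.prod_le_prod (fun _ _ => mgf_nonneg) fun i _ => mgf_indicator_one_le (hE i) ht

theorem measureReal_lt_abs_sum_indicator_sub_le {m : ℝ} (hm : ∑ i, μ.real (E i) = m) {η : ℝ}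
    (hη0 : 0 ≤ η) (hη1 : η ≤ 1) :
    μ.real {ω | η * m < |(∑ i, (E i).indicator 1) ω - m|} ≤ 2 * exp (-(η ^ 2 / 4 * m)) := by
  have hint : ∀ t, Integrable (fun ω => exp (t * (∑ i, (E i).indicator 1) ω)) μ := fun t =>
    integrable_exp_mul_sum_indicator_one hE t
  have hmgf : ∀ {t : ℝ}, |t| ≤ 1 → _ := fun ht => hm ▸ mgf_sum_indicator_one_le hE hindep ht
  have hη : |η / 2| ≤ 1 := by rw [abs_of_nonneg] <;> linarith
  have hupper : μ.real {ω | (1 + η) * m ≤ (∑ i, (E i).indicator 1) ω} ≤ exp (-(η ^ 2 / 4 * m)) :=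
    calc _ ≤ exp (-(η / 2) * ((1 + η) * m)) * mgf (∑ i, (E i).indicator 1) μ (η / 2) :=
          measure_ge_le_exp_mul_mgf _ (by positivity) (hint _)
      _ ≤ exp (-(η / 2) * ((1 + η) * m)) * exp (m * (η / 2 + (η / 2) ^ 2)) := by
          gcongr
          exact hmgf hη
      _ = exp (-(η ^ 2 / 4 * m)) := by
          rw [← exp_add]
          ring_nf
  have hlower : μ.real {ω | (∑ i, (E i).indicator 1) ω ≤ (1 - η) * m} ≤ exp (-(η ^ 2 / 4 * m)) :=
    calc _ ≤ exp (- -(η / 2) * ((1 - η) * m)) * mgf (∑ i, (E i).indicator 1) μ (-(η / 2)) :=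
          measure_le_le_exp_mul_mgf _ (by linarith) (hint _)
      _ ≤ exp (- -(η / 2) * ((1 - η) * m)) * exp (m * (-(η / 2) + (-(η / 2)) ^ 2)) := by
          gcongr
          exact hmgf (by rwa [abs_neg])
      _ = exp (-(η ^ 2 / 4 * m)) := by
          rw [← exp_add]
          ring_nf
  refine (measureReal_mono fun ω (hω : η * m < _) => ?_).trans ((measureReal_union_le
    {ω | (1 + η) * m ≤ (∑ i, (E i).indicator 1) ω}
    {ω | (∑ i, (E i).indicator 1) ω ≤ (1 - η) * m}).trans (by linarith))
  exact (lt_abs.1 hω).imp (fun h => show (1 + η) * m ≤ _ by linarith) fun h =>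
    show _ ≤ (1 - η) * m by linarith

end Concentration

/-! ### Random graphs are typical -/

section RandomGraph

open ProbabilityTheory

variable {n : ℕ} {p η : ℝ}

instance : IsProbabilityMeasure (erMeasure n p) := by
  unfold erMeasure
  infer_instance

theorem graphOf_adj {ω : EdgeType n → Bool} {x y : Fin n} (h : ¬ s(x, y).IsDiag) :
    (graphOf ω).Adj x y ↔ ω ⟨s(x, y), h⟩ = true := by
  rw [graphOf, SimpleGraph.fromEdgeSet_adj]
  exact ⟨fun h' => h'.1.2, fun h' => ⟨⟨h, h'⟩, h⟩⟩

theorem iIndepFun_eval_erMeasure :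
    iIndepFun (fun e (ω : EdgeType n → Bool) => ω e) (erMeasure n p) :=
  iIndepFun_pi (X := fun _ => id) fun _ => aemeasurable_id

/-- The pair `{x, a}` for `x ∉ B` and `a ∈ B`, as a potential edge. -/
def crossEdge (B : Finset (Fin n)) (i : {x // x ∉ B} × B) : EdgeType n :=
  ⟨s(i.1, i.2), fun h => i.1.2 (Sym2.mk_isDiag_iff.1 h ▸ i.2.2)⟩

theorem crossEdge_injective (B : Finset (Fin n)) : Function.Injective (crossEdge B) := by
  rintro ⟨⟨x, hx⟩, a, ha⟩ ⟨⟨y, hy⟩, b, hb⟩ h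
  obtain ⟨rfl, rfl⟩ | ⟨rfl, rfl⟩ := Sym2.eq_iff.1 (Subtype.ext_iff.1 h)
  · rfl
  · exact absurd hb hx

theorem mem_extensionSet_graphOf {A T : Finset (Fin n)} (hd : Disjoint A T)
    {ω : EdgeType n → Bool} (x : {x // x ∉ A ∪ T}) :
    ↑x ∈ extensionSet (graphOf ω) A T ↔ ∀ a, ω (crossEdge (A ∪ T) (x, a)) = decide (↑a ∈ A) := by
  have hadj : ∀ a : ↥(A ∪ T), (graphOf ω).Adj x a ↔ ω (crossEdge (A ∪ T) (x, a)) = true :=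
    fun a => graphOf_adj _
  have hxT : ↑x ∉ T := fun h => x.2 (Finset.mem_union_right A h)
  refine ⟨fun ⟨_, hA, hT⟩ a => ?_, fun h => ⟨hxT, fun a ha => ?_, fun b hb => ?_⟩⟩
  · by_cases ha : ↑a ∈ A
    · simpa [ha] using (hadj a).1 (hA a ha)
    · have := hT a ((Finset.mem_union.1 a.2).resolve_left ha)
      simpa [ha, hadj] using this
  · exact (hadj ⟨a, Finset.mem_union_left T ha⟩).2 ((h _).trans (decide_eq_true ha))
  · rw [hadj ⟨b, Finset.mem_union_right A hb⟩, h]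
    simpa using Finset.disjoint_right.1 hd hb

theorem ncard_extensionSet_graphOf (A T : Finset (Fin n)) (ω : EdgeType n → Bool) :
    ((extensionSet (graphOf ω) A T).ncard : ℝ) =
      (∑ x : {x // x ∉ A ∪ T}, {ω | ↑x ∈ extensionSet (graphOf ω) A T}.indicator 1) ω := by
  classical
  have hrange : extensionSet (graphOf ω) A T ⊆ Set.range ((↑) : {x // x ∉ A ∪ T} → Fin n) :=
    fun x hx => ⟨⟨x, fun h => (Finset.mem_union.1 h).elim
      (fun h => (hx.2.1 x h).ne rfl) hx.1⟩, rfl⟩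
  rw [← Set.ncard_preimage_of_injective_subset_range Subtype.val_injective hrange,
    Set.ncard_eq_toFinset_card', Finset.sum_apply]
  simp only [Set.indicator_apply, Set.mem_ofPred_eq, Pi.one_apply, Finset.sum_boole,
    Set.toFinset_card, Set.mem_preimage, Fintype.card_subtype]

section Density

variable (hp0 : 0 ≤ p) (hp1 : p ≤ 1)
include hp0 hp1

theorem measureReal_eval_erMeasure (e : EdgeType n) (b : Bool) :
    (erMeasure n p).real ((fun ω => ω e) ⁻¹' {b}) = cond b p (1 - p) := by
  have hp : p.toNNReal ≤ 1 := toNNReal_le_one.2 hp1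
  rw [erMeasure, measureReal_def, (measurePreserving_eval _ e).measure_preimage
    (measurableSet_singleton b).nullMeasurableSet,
    PMF.toMeasure_apply_singleton _ _ (measurableSet_singleton b), PMF.bernoulli_apply]
  cases b <;> simp [hp, hp0]

theorem measureReal_biInter_eval_erMeasure {ι : Type*} {φ : ι → EdgeType n}
    (hφ : Function.Injective φ) (b : ι → Bool) (I : Finset ι) :
    (erMeasure n p).real (⋂ i ∈ I, (fun ω => ω (φ i)) ⁻¹' {b i}) =
      ∏ i ∈ I, cond (b i) p (1 - p) := by
  rw [measureReal_def, (iIndepFun_iff_measure_inter_preimage_eq_mul.1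
    (iIndepFun_eval_erMeasure.precomp hφ)) I fun i _ => measurableSet_singleton (b i),
    ENNReal.toReal_prod]
  exact Finset.prod_congr rfl fun i _ => measureReal_eval_erMeasure hp0 hp1 (φ i) (b i)

variable {A T : Finset (Fin n)} (hd : Disjoint A T)
include hd

theorem measureReal_biInter_mem_extensionSet (W : Finset {x // x ∉ A ∪ T}) :
    (erMeasure n p).real (⋂ x ∈ W, {ω | ↑x ∈ extensionSet (graphOf ω) A T}) =
      (p ^ A.card * (1 - p) ^ T.card) ^ W.card := by
  have hset : (⋂ x ∈ W, {ω | ↑x ∈ extensionSet (graphOf ω) A T}) =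
      ⋂ i ∈ W ×ˢ (Finset.univ : Finset ↥(A ∪ T)),
        (fun ω => ω (crossEdge (A ∪ T) i)) ⁻¹' {decide (↑i.2 ∈ A)} := by
    ext ω
    simp only [Set.mem_iInter, Set.mem_ofPred_eq, mem_extensionSet_graphOf hd, Finset.mem_product,
      Finset.mem_univ, and_true, Prod.forall, Set.mem_preimage, Set.mem_singleton_iff]
    exact forall_congr' fun _ => forall_comm
  have hstar : ∏ a : ↥(A ∪ T), cond (decide (↑a ∈ A)) p (1 - p) =
      p ^ A.card * (1 - p) ^ T.card := by
    rw [Finset.prod_coe_sort (A ∪ T) fun a => cond (decide (a ∈ A)) p (1 - p),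
      Finset.prod_union hd, Finset.prod_eq_pow_card (b := p) fun a ha => by simp [ha],
      Finset.prod_eq_pow_card (b := 1 - p) fun a ha => by simp [Finset.disjoint_right.1 hd ha]]
  rw [hset, measureReal_biInter_eval_erMeasure hp0 hp1 (crossEdge_injective _)
    fun i : _ × ↥(A ∪ T) => decide (↑i.2 ∈ A), Finset.prod_product]
  simp only [hstar, Finset.prod_const]

theorem measureReal_mem_extensionSet (x : {x // x ∉ A ∪ T}) :
    (erMeasure n p).real {ω | ↑x ∈ extensionSet (graphOf ω) A T} =
      p ^ A.card * (1 - p) ^ T.card := by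
  simpa using measureReal_biInter_mem_extensionSet hp0 hp1 hd {x}

theorem iIndepSet_mem_extensionSet :
    iIndepSet (fun x : {x // x ∉ A ∪ T} => {ω | ↑x ∈ extensionSet (graphOf ω) A T})
      (erMeasure n p) := by
  refine (iIndepSet_iff_meas_biInter fun _ => .of_discrete).2 fun W => ?_
  rw [← ENNReal.toReal_eq_toReal_iff' (measure_ne_top _ _)
    (ENNReal.prod_ne_top fun _ _ => measure_ne_top _ _), ENNReal.toReal_prod]
  refine (measureReal_biInter_mem_extensionSet hp0 hp1 hd W).trans
    (Finset.prod_eq_pow_card fun x _ => ?_).symm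
  exact measureReal_mem_extensionSet hp0 hp1 hd x

theorem measureReal_lt_abs_ncard_extensionSet_sub_le (hη0 : 0 ≤ η) (hη1 : η ≤ 1) {m : ℝ}
    (hm : (n - (A.card + T.card)) * (p ^ A.card * (1 - p) ^ T.card) = m) :
    (erMeasure n p).real {ω | η * m < |(extensionSet (graphOf ω) A T).ncard - m|} ≤
      2 * exp (-(η ^ 2 / 4 * m)) := by
  simp only [ncard_extensionSet_graphOf]
  refine measureReal_lt_abs_sum_indicator_sub_le (fun _ => .of_discrete)
    (iIndepSet_mem_extensionSet hp0 hp1 hd) ?_ hη0 hη1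
  simp only [measureReal_mem_extensionSet hp0 hp1 hd]
  have hcard : (n : ℝ) - (A.card + T.card) = (A ∪ T)ᶜ.card := by
    rw [sub_eq_iff_eq_add', ← Nat.cast_add, ← Finset.card_union_of_disjoint hd]
    exact_mod_cast (Fintype.card_fin n).symm.trans (Finset.card_add_card_compl _).symm
  rw [← hm, hcard, Finset.sum_const, nsmul_eq_mul, Finset.card_univ, Fintype.card_subtype,
    Finset.filter_notMem_eq_sdiff, ← Finset.compl_eq_univ_sdiff]

theorem measureReal_lt_abs_ncard_extensionSet_sub_le_of_card_le (hη0 : 0 ≤ η) (hη1 : η ≤ 1)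
    (hcard : A.card + T.card ≤ η / 2 * n) {c : ℝ}
    (hc : p ^ A.card * (1 - p) ^ T.card * n = c) :
    (erMeasure n p).real {ω | η * c < |(extensionSet (graphOf ω) A T).ncard - c|} ≤
      2 * exp (-(η ^ 2 / 32 * c)) := by
  obtain ⟨m, hm⟩ : ∃ m, (n - (A.card + T.card)) * (p ^ A.card * (1 - p) ^ T.card) = m := ⟨_, rfl⟩
  have hdensity : 0 ≤ p ^ A.card * (1 - p) ^ T.card :=
    mul_nonneg (pow_nonneg hp0 _) (pow_nonneg (sub_nonneg.2 hp1) _)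
  have hc0 : 0 ≤ c := hc ▸ mul_nonneg hdensity n.cast_nonneg
  have hle : c - m ≤ η / 2 * c := by
    calc c - m = p ^ A.card * (1 - p) ^ T.card * (A.card + T.card) := by
          rw [← hm, ← hc]
          ring
      _ ≤ p ^ A.card * (1 - p) ^ T.card * (η / 2 * n) := by gcongr
      _ = η / 2 * c := by
          rw [← hc]
          ring
  have hmc : m ≤ c := by
    rw [← hm, ← hc, mul_comm]
    gcongr
    exact sub_le_self _ (by positivity)
  calc _ ≤ (erMeasure n p).real {ω | η / 2 * m < |(extensionSet (graphOf ω) A T).ncard - m|} := by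
        refine measureReal_mono fun ω (hω : η * c < _) => ?_
        have := abs_sub_le ((extensionSet (graphOf ω) A T).ncard : ℝ) m c
        rw [abs_of_nonpos (sub_nonpos.2 hmc)] at this
        exact show η / 2 * m < _ by nlinarith
    _ ≤ 2 * exp (-((η / 2) ^ 2 / 4 * m)) :=
        measureReal_lt_abs_ncard_extensionSet_sub_le hp0 hp1 hd (by linarith) (by linarith) hm
    _ ≤ 2 * exp (-(η ^ 2 / 32 * c)) := by
        gcongr 2 * exp (-?_)
        have hhalf : c / 2 ≤ m := by nlinarith
        nlinarith [mul_le_mul_of_nonneg_left hhalf (sq_nonneg η)]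

end Density

theorem card_filter_card_le_le_pow {α : Type*} [Fintype α] (m : ℕ) :
    (Finset.univ.filter fun A : Finset α => A.card ≤ m).card ≤ (Fintype.card α + 1) ^ m := by
  classical
  have hunion : (Finset.univ.filter fun A : Finset α => A.card ≤ m) =
      (Finset.range (m + 1)).biUnion fun k => Finset.powersetCard k Finset.univ := by
    ext A
    simp
  calc _ ≤ ∑ k ∈ Finset.range (m + 1), (Fintype.card α).choose k := by
        rw [hunion]
        simpa using Finset.card_biUnion_le (s := Finset.range (m + 1))
          (t := fun k => Finset.powersetCard k (Finset.univ : Finset α))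
    _ ≤ ∑ k ∈ Finset.range (m + 1), Fintype.card α ^ k * 1 ^ (m - k) * m.choose k := by
        refine Finset.sum_le_sum fun k hk => (Nat.choose_le_pow _ k).trans ?_
        rw [one_pow, mul_one]
        exact Nat.le_mul_of_pos_right _ (Nat.choose_pos (Finset.mem_range_succ_iff.1 hk))
    _ = (Fintype.card α + 1) ^ m := (add_pow _ 1 m).symm

theorem measureReal_not_isTypical_le (hp0 : 0 ≤ p) (hp1 : p ≤ 1) (hη0 : 0 ≤ η) (hη1 : η ≤ 1)
    {s t : ℕ} (hst : (s + t : ℝ) ≤ η / 2 * n) :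
    (erMeasure n p).real {ω | ¬ IsTypical (graphOf ω) p η s t} ≤
      (n + 1) ^ (s + t) * (2 * exp (-(η ^ 2 / 32 * (p ^ s * (1 - p) ^ t * n)))) := by
  classical
  let sets (k : ℕ) : Finset (Finset (Fin n)) := Finset.univ.filter fun A => A.card ≤ k
  let pairs := (sets s ×ˢ sets t).filter fun q => Disjoint q.1 q.2
  let density (q : Finset (Fin n) × Finset (Fin n)) := p ^ q.1.card * (1 - p) ^ q.2.card * n
  have hpairs : ∀ {q}, q ∈ pairs ↔ (q.1.card ≤ s ∧ q.2.card ≤ t) ∧ Disjoint q.1 q.2 := by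
    simp [pairs, sets]
  have hcard : (pairs.card : ℝ) ≤ (n + 1) ^ (s + t) := by
    have := (Finset.card_filter_le (sets s ×ˢ sets t) fun q => Disjoint q.1 q.2).trans
      ((Finset.card_product _ _).trans_le (Nat.mul_le_mul (card_filter_card_le_le_pow s)
        (card_filter_card_le_le_pow t)))
    rw [← pow_add, Fintype.card_fin] at this
    exact_mod_cast this
  calc _ ≤ (erMeasure n p).real (⋃ q ∈ pairs,
          {ω | η * density q < |(extensionSet (graphOf ω) q.1 q.2).ncard - density q|}) := by
        refine measureReal_mono (fun ω hω => ?_) (measure_ne_top _ _)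
        simp only [IsTypical, Set.mem_ofPred_eq, Nat.card_fin, not_forall, not_le] at hω
        obtain ⟨A, T, hd, hA, hT, h⟩ := hω
        exact Set.mem_biUnion (hpairs.2 ⟨⟨hA, hT⟩, hd⟩ : (A, T) ∈ pairs) h
    _ ≤ ∑ q ∈ pairs, _ := measureReal_biUnion_finset_le _ _
    _ ≤ ∑ _q ∈ pairs, 2 * exp (-(η ^ 2 / 32 * (p ^ s * (1 - p) ^ t * n))) := by
        refine Finset.sum_le_sum fun q hq => ?_
        obtain ⟨⟨hs, ht⟩, hd⟩ := hpairs.1 hq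
        refine (measureReal_lt_abs_ncard_extensionSet_sub_le_of_card_le hp0 hp1 hd hη0 hη1
          (le_trans (by gcongr) hst) rfl).trans ?_
        have hq0 : 0 ≤ 1 - p := sub_nonneg.2 hp1
        gcongr 2 * exp (-(η ^ 2 / 32 * (?_ * ?_ * n)))
        · exact pow_le_pow_of_le_one hp0 hp1 hs
        · exact pow_le_pow_of_le_one hq0 (sub_le_self 1 hp0) ht
    _ ≤ _ := by
        rw [Finset.sum_const, nsmul_eq_mul]
        gcongr

end RandomGraph

/-! ### Asymptotics -/

section Asymptotics

open Asymptotics Topology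

theorem tendsto_measure_of_compl_le {Ω : ℕ → Type*} [∀ n, MeasurableSpace (Ω n)]
    {μ : ∀ n, Measure (Ω n)} [∀ n, IsProbabilityMeasure (μ n)] {S : ∀ n, Set (Ω n)}
    (hS : ∀ n, MeasurableSet (S n)) {f : ℕ → ℝ} (hf : Tendsto f atTop (𝓝 0))
    (hle : ∀ᶠ n in atTop, (μ n).real (S n)ᶜ ≤ f n) : Tendsto (fun n => μ n (S n)) atTop (𝓝 1) := by
  have hreal : Tendsto (fun n => 1 - (μ n).real (S n)ᶜ) atTop (𝓝 1) := by
    simpa using (tendsto_of_tendsto_of_tendsto_of_le_of_le' tendsto_const_nhds hf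
      (.of_forall fun _ => measureReal_nonneg) hle).const_sub 1
  simpa [prob_compl_eq_one_sub, probReal_compl_eq_one_sub, hS] using ENNReal.tendsto_ofReal hreal

theorem tendsto_measure_of_eventually_subset {Ω : ℕ → Type*} [∀ n, MeasurableSpace (Ω n)]
    {μ : ∀ n, Measure (Ω n)} [∀ n, IsProbabilityMeasure (μ n)] {S S' : ∀ n, Set (Ω n)}
    (hS : Tendsto (fun n => μ n (S n)) atTop (𝓝 1)) (hSS' : ∀ᶠ n in atTop, S n ⊆ S' n) :
    Tendsto (fun n => μ n (S' n)) atTop (𝓝 1) :=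
  tendsto_of_tendsto_of_tendsto_of_le_of_le' hS tendsto_const_nhds
    (hSS'.mono fun _ h => measure_mono h) (.of_forall fun _ => prob_le_one)

theorem isBigO_log_succ : (fun n : ℕ => log (n + 1)) =O[atTop] fun n : ℕ => log n := by
  refine .of_bound 2 ?_
  filter_upwards [eventually_ge_atTop 2] with n hn
  have hn' : (2 : ℝ) ≤ n := by exact_mod_cast hn
  rw [norm_of_nonneg (log_nonneg (by linarith)), norm_of_nonneg (log_nonneg (by linarith)),
    ← log_rpow (by linarith), rpow_two]
  exact log_le_log (by linarith) (by nlinarith)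

theorem isLittleO_log_natCast_rpow {r : ℝ} (hr : 0 < r) :
    (fun n : ℕ => log n) =o[atTop] fun n : ℕ => (n : ℝ) ^ r :=
  (isLittleO_log_rpow_atTop hr).comp_tendsto tendsto_natCast_atTop_atTop

theorem tendsto_atTop_of_rpow_isBigO {w : ℕ → ℝ} {r : ℝ} (hr : 0 < r) (hw0 : ∀ n, 0 ≤ w n)
    (hw : (fun n : ℕ => (n : ℝ) ^ r) =O[atTop] w) : Tendsto w atTop atTop := by
  refine (hw.trans_tendsto_norm_atTop ?_).congr fun n => norm_of_nonneg (hw0 n)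
  exact tendsto_norm_atTop_atTop.comp ((tendsto_rpow_atTop hr).comp tendsto_natCast_atTop_atTop)

theorem isLittleO_sq_of_isBigO_rpow {w : ℕ → ℝ} {r : ℝ} (hr : r < 1 / 2)
    (hw : w =O[atTop] fun n : ℕ => (n : ℝ) ^ r) :
    (fun n => w n ^ 2) =o[atTop] fun n : ℕ => (n : ℝ) := by
  refine (hw.pow 2).trans_isLittleO ?_
  have hneg : Tendsto (fun n : ℕ => (n : ℝ) ^ (-(1 - 2 * r))) atTop (𝓝 0) :=
    (tendsto_rpow_neg_atTop (by linarith)).comp tendsto_natCast_atTop_atTop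
  refine (isLittleO_iff_tendsto' ?_).2 (hneg.congr' ?_) <;>
    filter_upwards [eventually_gt_atTop 0] with n hn
  · exact fun h => absurd h (by positivity)
  · rw [neg_sub, rpow_sub_one (by positivity), mul_comm, rpow_mul n.cast_nonneg, rpow_two]

theorem isBigO_natCast_add_log {t : ℕ → ℕ}
    (ht : (fun n => (t n : ℝ)) =O[atTop] fun n : ℕ => log n) (s : ℕ) :
    (fun n => (s + t n : ℝ)) =O[atTop] fun n : ℕ => log n :=
  ((isLittleO_const_log_atTop (c := (s : ℝ))).comp_tendsto
    tendsto_natCast_atTop_atTop).isBigO.add ht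

theorem tendsto_natCast_add_one_pow_mul_exp_neg {k : ℕ → ℕ} {w : ℕ → ℝ}
    (hw : Tendsto w atTop atTop) (hk : (fun n => k n * log (n + 1)) =o[atTop] w) {c : ℝ}
    (hc : 0 < c) :
    Tendsto (fun n : ℕ => ((n : ℝ) + 1) ^ k n * (2 * exp (-(c * w n)))) atTop (𝓝 0) := by
  have hexponent : Tendsto (fun n : ℕ => k n * log (n + 1) - c * w n) atTop atBot := by
    refine tendsto_atBot_mono' _ ?_
      (tendsto_neg_atTop_atBot.comp (hw.const_mul_atTop (half_pos hc)))
    filter_upwards [hk.def (half_pos hc), hw.eventually_ge_atTop 0] with n hn hwn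
    rw [norm_of_nonneg hwn] at hn
    simp only [Function.comp_apply]
    linarith [le_norm_self (k n * log (n + 1))]
  convert (tendsto_exp_atBot.comp hexponent).const_mul 2 using 2 with n
  · rw [Function.comp_apply, sub_eq_add_neg, exp_add, exp_nat_mul, exp_log (by positivity)]
    ring
  · simp

variable {p η : ℝ}

theorem tendsto_erMeasure_isTypical (hp0 : 0 < p) (hp1 : p ≤ 1) (hη0 : 0 < η) (hη1 : η ≤ 1) (s : ℕ)
    {t : ℕ → ℕ} (ht : (fun n => (t n : ℝ)) =O[atTop] fun n : ℕ => log n) {r : ℝ} (hr : 0 < r)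
    (hlow : (fun n : ℕ => (n : ℝ) ^ r) =O[atTop] fun n => (1 - p) ^ t n * n) :
    Tendsto (fun n => erMeasure n p {ω | IsTypical (graphOf ω) p η s (t n)}) atTop (𝓝 1) := by
  have hst := isBigO_natCast_add_log ht s
  have hw : Tendsto (fun n => (1 - p) ^ t n * (n : ℝ)) atTop atTop :=
    tendsto_atTop_of_rpow_isBigO hr
      (fun n => mul_nonneg (pow_nonneg (sub_nonneg.2 hp1) _) n.cast_nonneg) hlow
  have hexponent : (fun n : ℕ => ((s + t n : ℕ) : ℝ) * log (n + 1)) =o[atTop]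
      fun n => (1 - p) ^ t n * n := by
    refine IsLittleO.trans_isBigO ?_ hlow
    refine (((hst.trans_isLittleO (isLittleO_log_natCast_rpow (half_pos hr))).mul_isBigO
      (isBigO_log_succ.trans (isLittleO_log_natCast_rpow (half_pos hr)).isBigO))).congr'
        (.of_forall fun n => by simp) ?_
    filter_upwards [eventually_gt_atTop 0] with n hn
    rw [← rpow_add (by exact_mod_cast hn), add_halves]
  refine tendsto_measure_of_compl_le (fun n => .of_discrete)
    (tendsto_natCast_add_one_pow_mul_exp_neg hw hexponent
      (c := η ^ 2 / 32 * p ^ s) (by positivity)) ?_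
  filter_upwards [(hst.trans_isLittleO (isLittleO_log_natCast_rpow one_pos)).def (half_pos hη0)]
    with n hn
  rw [rpow_one, Real.norm_natCast, norm_of_nonneg (by positivity)] at hn
  refine (measureReal_not_isTypical_le hp0.le hp1 hη0.le hη1 hn).trans_eq ?_
  rw [mul_assoc (p ^ s), mul_assoc (η ^ 2 / 32)]

theorem tendsto_erMeasure_isTypical_add (hp0 : 0 < p) (hp1 : p < 1) (hη0 : 0 < η) (hη1 : η ≤ 1)
    (s j : ℕ) {t : ℕ → ℕ} (ht : (fun n => (t n : ℝ)) =O[atTop] fun n : ℕ => log n) {r : ℝ}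
    (hr : 0 < r) (hlow : (fun n : ℕ => (n : ℝ) ^ r) =O[atTop] fun n => (1 - p) ^ t n * n) :
    Tendsto (fun n => erMeasure n p {ω | IsTypical (graphOf ω) p η s (t n + j)}) atTop (𝓝 1) := by
  refine tendsto_erMeasure_isTypical hp0 hp1.le hη0 hη1 s ?_ hr ?_
  · simpa [add_comm] using isBigO_natCast_add_log ht j
  · refine (hlow.const_mul_right (pow_ne_zero j (sub_pos.2 hp1).ne')).congr_right fun n => ?_
    ring

theorem isTheta_pow_floor_mul_log {q c : ℝ} (hq0 : 0 < q) (hq1 : q ≤ 1) (hc : 0 ≤ c) :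
    (fun n : ℕ => q ^ ⌊c * log n⌋₊) =Θ[atTop] fun n : ℕ => (n : ℝ) ^ (c * log q) := by
  have hpow : ∀ᶠ n : ℕ in atTop, (n : ℝ) ^ (c * log q) = q ^ (c * log n) := by
    filter_upwards [eventually_gt_atTop 0] with n hn
    rw [rpow_def_of_pos (by exact_mod_cast hn), rpow_def_of_pos hq0]
    ring_nf
  constructor
  · refine .of_bound q⁻¹ ?_
    filter_upwards [hpow] with n hn
    rw [hn, norm_of_nonneg (by positivity), norm_of_nonneg (by positivity), ← rpow_natCast,
      ← rpow_neg_one, ← rpow_add hq0]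
    exact rpow_le_rpow_of_exponent_ge hq0 hq1 (by linarith [Nat.lt_floor_add_one (c * log n)])
  · refine .of_bound 1 ?_
    filter_upwards [hpow] with n hn
    rw [hn, norm_of_nonneg (by positivity), norm_of_nonneg (by positivity), one_mul,
      ← rpow_natCast]
    exact rpow_le_rpow_of_exponent_ge hq0 hq1 (Nat.floor_le (by positivity))

theorem isBigO_floor_mul_log {c : ℝ} (hc : 0 ≤ c) :
    (fun n : ℕ => (⌊c * log n⌋₊ : ℝ)) =O[atTop] fun n : ℕ => log n := by
  refine .of_bound c (.of_forall fun n => ?_)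
  rw [Real.norm_natCast, norm_of_nonneg (log_natCast_nonneg n)]
  exact Nat.floor_le (by positivity)

theorem exists_isBigO_log_isTheta_pow_mul {q r : ℝ} (hq0 : 0 < q) (hq1 : q < 1) (hr : r ≤ 1) :
    ∃ k : ℕ → ℕ, (fun n => (k n : ℝ)) =O[atTop] (fun n : ℕ => log n) ∧
      (fun n : ℕ => q ^ k n * n) =Θ[atTop] fun n : ℕ => (n : ℝ) ^ r := by
  have hlog : log q < 0 := log_neg hq0 hq1
  have hc : 0 ≤ (r - 1) / log q := div_nonneg_of_nonpos (by linarith) hlog.le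
  refine ⟨fun n => ⌊(r - 1) / log q * log n⌋₊, isBigO_floor_mul_log hc, ?_⟩
  refine ((isTheta_pow_floor_mul_log hq0 hq1.le hc).mul (isTheta_refl _ _)).trans_eventuallyEq ?_
  filter_upwards [eventually_gt_atTop 0] with n hn
  rw [div_mul_cancel₀ _ hlog.ne, rpow_sub_one (by positivity), div_mul_cancel₀ _ (by positivity)]

theorem eventually_satNum_le (hp0 : 0 < p) (hp1 : p < 1) (hη0 : 0 < η) (hη1 : η < 1)
    (hQ : 2 * ((1 + η) * (1 - p) ^ 3) + 3 * η ≤ (1 - η) * ((1 - (1 - p) ^ 3) / 3)) {j : ℕ}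
    (hj : (1 - p) ^ j ≤ η) {k : ℕ → ℕ}
    (hk : Tendsto (fun n : ℕ => (1 - p) ^ (3 * k n) * n) atTop atTop)
    (hk_sq : (fun n : ℕ => ((1 - p) ^ (3 * k n) * n) ^ 2) =o[atTop] fun n : ℕ => (n : ℝ))
    {ε : ℝ} (hε : η < ε) :
    ∀ᶠ n : ℕ in atTop, ∀ G : SimpleGraph (Fin n), IsTypical G p η 3 (3 * k n + j) →
      (satNum G (cycGraph 4) : ℝ) ≤ saturationConst ((1 - p) ^ 3) * n * (1 + ε) := by
  have hq : 0 < 1 - p := sub_pos.2 hp1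
  have hC : 0 < saturationConst ((1 - p) ^ 3) :=
    saturationConst_pos (by positivity) (pow_lt_one₀ hq.le (by linarith) three_ne_zero)
  have hsq := (hk_sq.const_mul_left ((1 + η) ^ 2)).def (mul_pos (sub_pos.2 hε) hC)
  filter_upwards [hsq, (hk.const_mul_atTop hη0).eventually_ge_atTop 1,
    (hk.const_mul_atTop (mul_pos (sub_pos.2 hη1) (mul_pos (pow_pos hp0 2)
      hq))).eventually_ge_atTop (2 * j)] with n hn hcard hdeg G hG
  rw [norm_of_nonneg (by positivity), Real.norm_natCast, ← mul_pow] at hn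
  have h := hG.satNum_le hp0 hp1 hη0.le hη1 hQ hj (by simpa [mul_assoc] using hdeg)
    (by simpa using hcard) rfl
  rw [Nat.card_fin] at h
  linarith

theorem one_sub_pow_three_lt (hp1 : p ≤ 1) (hp : 1 - 1 / (7 : ℝ) ^ ((1 : ℝ) / 3) < p) :
    (1 - p) ^ 3 < 1 / 7 := by
  calc (1 - p) ^ 3 < (1 / (7 : ℝ) ^ ((1 : ℝ) / 3)) ^ 3 :=
        pow_lt_pow_left₀ (by linarith) (by linarith) three_ne_zero
    _ = 1 / 7 := by
        rw [div_pow, one_pow, ← rpow_natCast, ← rpow_mul (by norm_num)]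
        norm_num

end Asymptotics

/-- For fixed `p ∈ (0,1)` with `p > 1 − 1/∛7`, whp
`sat(G(n,p), C_4) ≤ (3(1+(1−p)³)/(2(1−(1−p)³)))·n·(1+o(1))`. -/
theorem c4_saturation_upper_large_p (p : ℝ) (hp0 : 0 < p) (hp1 : p < 1)
    (hp : 1 - 1 / (7 : ℝ) ^ ((1 : ℝ) / 3) < p) (ε : ℝ) (hε : 0 < ε) :
    Tendsto (fun n : ℕ =>
      erMeasure n p {ω |
        (satNum (graphOf ω) (cycGraph 4) : ℝ)
          ≤ (3 * (1 + (1 - p) ^ 3) / (2 * (1 - (1 - p) ^ 3))) * n * (1 + ε)})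
      atTop (nhds 1) := by
  have hq : 0 < 1 - p := sub_pos.2 hp1
  have hQ := one_sub_pow_three_lt hp1.le hp
  obtain ⟨η, hη0, hη⟩ := exists_between
    (show 0 < min ε (min 1 ((1 - 7 * (1 - p) ^ 3) / 12)) from
      lt_min hε (lt_min one_pos (by linarith)))
  obtain ⟨hηε, hη1, hηQ⟩ := by simpa only [lt_min_iff] using hη
  obtain ⟨j, hj⟩ := exists_pow_lt_of_lt_one hη0 (sub_lt_self 1 hp0)
  obtain ⟨k, hk_log, hk⟩ := exists_isBigO_log_isTheta_pow_mul (r := 2 / 5) (pow_pos hq 3)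
    (hQ.trans (by norm_num)) (by norm_num)
  simp only [← pow_mul] at hk
  have htypical := tendsto_erMeasure_isTypical_add hp0 hp1 hη0 hη1.le 3 j
    (t := fun n => 3 * k n) (by simpa using hk_log.const_mul_left 3) (by norm_num) hk.2
  have hgrowth := tendsto_atTop_of_rpow_isBigO (by norm_num) (fun n => by positivity) hk.2
  refine tendsto_measure_of_eventually_subset htypical ?_
  filter_upwards [eventually_satNum_le hp0 hp1 hη0 hη1 (by nlinarith) hj.le hgrowth
    (isLittleO_sq_of_isBigO_rpow (by norm_num) hk.1) hηε] with n hn ω hω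
  exact hn (graphOf ω) hω
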